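/- Let u : D_r ⊂ ℝ² → ℝᵐ be smooth on the disk of radius r with |Du| ≤ α, and let Σ = Graph(u) with second fundamental form A. Then for every k ≥ 0 there is C = C(r, α, k) such that ‖A‖_{H^{k,2}} ≤ C Σ_{s=1}^{k+1} ‖D²u‖^s_{W^{k,2}}, where ‖A‖_{H^{k,2}}² = Σ_{l≤k} ∫_Σ |∇^l A|²_g dμ and ‖D²u‖_{W^{k,2}} is the usual Sobolev norm of the Hessian on D_r. -/

import Mathlib

noncomputable section Stmt17

namespace Stmt17

variable {m : ℕ}

/-- Partial derivative of a map into the ambient ℝ^{2+m} ≅ ℝ² ⊕ ℝᵐ. -/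
def pd (f : (Fin 2 → ℝ) → (Fin 2 ⊕ Fin m → ℝ)) (i : Fin 2) :
    (Fin 2 → ℝ) → (Fin 2 ⊕ Fin m → ℝ) :=
  fun x => fderiv ℝ f x (Pi.single i 1)

def dotA (v w : Fin 2 ⊕ Fin m → ℝ) : ℝ := ∑ A, v A * w A

/-- The graph immersion F(x) = (x, u(x)). -/
def gr (u : (Fin 2 → ℝ) → (Fin m → ℝ)) : (Fin 2 → ℝ) → (Fin 2 ⊕ Fin m → ℝ) :=
  fun x => Sum.elim x (u x)

def gmet (F : (Fin 2 → ℝ) → (Fin 2 ⊕ Fin m → ℝ)) (x : Fin 2 → ℝ) :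
    Matrix (Fin 2) (Fin 2) ℝ :=
  Matrix.of fun i j => dotA (pd F i x) (pd F j x)

def nproj (F : (Fin 2 → ℝ) → (Fin 2 ⊕ Fin m → ℝ)) (x : Fin 2 → ℝ)
    (v : Fin 2 ⊕ Fin m → ℝ) : Fin 2 ⊕ Fin m → ℝ :=
  v - ∑ k, ∑ l, ((gmet F x)⁻¹ k l * dotA v (pd F l x)) • pd F k x

def chr (F : (Fin 2 → ℝ) → (Fin 2 ⊕ Fin m → ℝ)) (i j k : Fin 2)
    (x : Fin 2 → ℝ) : ℝ :=
  ∑ l, (gmet F x)⁻¹ k l * dotA (pd (pd F i) j x) (pd F l x)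

def sffT (F : (Fin 2 → ℝ) → (Fin 2 ⊕ Fin m → ℝ)) :
    (Fin 2 → ℝ) → (Fin 2 → Fin 2) → (Fin 2 ⊕ Fin m → ℝ) :=
  fun x I => nproj F x (pd (pd F (I 0)) (I 1) x)

def covDer (F : (Fin 2 → ℝ) → (Fin 2 ⊕ Fin m → ℝ)) (l : ℕ)
    (T : (Fin 2 → ℝ) → (Fin l → Fin 2) → (Fin 2 ⊕ Fin m → ℝ)) :
    (Fin 2 → ℝ) → (Fin (l+1) → Fin 2) → (Fin 2 ⊕ Fin m → ℝ) :=
  fun x I =>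
    nproj F x (pd (fun y => T y (Fin.tail I)) (I 0) x)
      - ∑ a : Fin l, ∑ mm : Fin 2,
          chr F (I 0) (Fin.tail I a) mm x • T x (Function.update (Fin.tail I) a mm)

/-- Iterated covariant derivative ∇ˡA. -/
def covIter (F : (Fin 2 → ℝ) → (Fin 2 ⊕ Fin m → ℝ)) :
    (l : ℕ) → (Fin 2 → ℝ) → (Fin (l+2) → Fin 2) → (Fin 2 ⊕ Fin m → ℝ)
  | 0 => sffT F
  | (l+1) => covDer F (l+2) (covIter F l)

/-- Pointwise squared g-norm `|∇ˡA|²_g`. -/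
def nCov2 (F : (Fin 2 → ℝ) → (Fin 2 ⊕ Fin m → ℝ)) (l : ℕ) (x : Fin 2 → ℝ) : ℝ :=
  ∑ I : Fin (l+2) → Fin 2, ∑ J : Fin (l+2) → Fin 2,
    (∏ s, (gmet F x)⁻¹ (I s) (J s)) * dotA (covIter F l x I) (covIter F l x J)

/-- Iterated partial derivatives Dˡu. -/
def pdIter (u : (Fin 2 → ℝ) → (Fin m → ℝ)) :
    (l : ℕ) → (Fin 2 → ℝ) → (Fin l → Fin 2) → (Fin m → ℝ)
  | 0 => fun x _ => u x
  | (l+1) => fun x I =>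
      fderiv ℝ (fun y => pdIter u l y (Fin.tail I)) x (Pi.single (I 0) 1)

/-- The open disk of radius r in ℝ². -/
def Dr (r : ℝ) : Set (Fin 2 → ℝ) := {x | x 0 ^ 2 + x 1 ^ 2 < r ^ 2}

/-- The Sobolev norm `‖A‖_{H^{k,2}}` of the second fundamental form of the graph. -/
def HAnorm (r : ℝ) (k : ℕ) (u : (Fin 2 → ℝ) → (Fin m → ℝ)) : ℝ :=
  Real.sqrt (∑ l ∈ Finset.range (k+1),
    ∫ x in Dr r, nCov2 (gr u) l x * Real.sqrt (gmet (gr u) x).det)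

/-- The usual Sobolev norm `‖D²u‖_{W^{k,2}}` of the Hessian on the disk. -/
def Wnorm (r : ℝ) (k : ℕ) (u : (Fin 2 → ℝ) → (Fin m → ℝ)) : ℝ :=
  Real.sqrt (∑ l ∈ Finset.range (k+1),
    ∫ x in Dr r, ∑ I : Fin (l+2) → Fin 2, ∑ a, (pdIter u (l+2) x I a) ^ 2)

end Stmt17

/-!
Let `u` have gradient bound `|Du| ≤ α` and give `Dʲ⁺¹u` the weight `j`. The components of `∇ˡA` are
then polynomial in the higher derivatives of `u`, of weight at most `l + 1`, with bounded
coefficients, and the only term containing `Dˡ⁺²u` is its normal projection. Hence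
`|∇ˡA| ≤ C (|Dˡ⁺²u| + R + Rˡ⁺¹)` and conversely `|Dˡ⁺²u| ≤ C (|∇ˡA| + R + Rˡ⁺¹)`, where
`R = ∑_{1 ≤ j ≤ l} |Dʲ⁺¹u|`. In two dimensions `W^{1,2} ⊆ Lᵖ` for all `p < ∞`, so the first estimate
gives `‖∇ˡA‖₂ ≤ C (H + Hˡ⁺¹)` with `H = ‖D²u‖_{W^{l,2}}`.

As `u` is smooth on the open disk only, these integrals may diverge, in which case the Bochner
integrals in `HAnorm` and `Wnorm` are `0`. It is therefore also necessary that `∇ˡA ∈ L²` implies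
`Dʲ⁺²u ∈ L²` for all `j ≤ l`. Kato's inequality `|∂√(1 + |∇ʲA|²)| ≤ C |∇ʲ⁺¹A|` and the embedding
give `∇ʲA ∈ Lᵖ`, `p < ∞`, for all `j < l` by descending induction; the converse pointwise estimate
then gives `Dʲ⁺²u ∈ L²` for all `j ≤ l` by ascending induction.
-/

namespace Stmt17

open MeasureTheory Set Filter Asymptotics
open scoped ENNReal NNReal

section LineIntegral

theorem lintegral_comp_smul_add_smul (v w : Fin 2 → ℝ) (hvw : v 0 * w 1 - w 0 * v 1 ≠ 0)
    {F : (Fin 2 → ℝ) → ℝ≥0∞} (hF : Measurable F) :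
    ∫⁻ q : ℝ × ℝ, F (q.1 • v + q.2 • w) =
      ENNReal.ofReal |(v 0 * w 1 - w 0 * v 1)⁻¹| * ∫⁻ p, F p := by
  have hdet : (!![v 0, w 0; v 1, w 1]).det = v 0 * w 1 - w 0 * v 1 := Matrix.det_fin_two_of _ _ _ _
  set L := Matrix.toLin' !![v 0, w 0; v 1, w 1]
  have hLm : Measurable L := L.continuous_of_finiteDimensional.measurable
  have hL (q : ℝ × ℝ) : L ![q.1, q.2] = q.1 • v + q.2 • w := by
    ext i; fin_cases i <;> simp [L, Matrix.mulVec, dotProduct, Fin.sum_univ_two, mul_comm]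
  calc ∫⁻ q : ℝ × ℝ, F (q.1 • v + q.2 • w)
      = ∫⁻ q : ℝ × ℝ, F (L ![q.1, q.2]) := by simp_rw [hL]
    _ = ∫⁻ p, F (L p) := (volume_preserving_finTwoArrow ℝ).symm.lintegral_comp (hF.comp hLm)
    _ = ∫⁻ p, F p ∂(volume.map L) := (lintegral_map hF hLm).symm
    _ = _ := by
      rw [Real.map_matrix_volume_pi_eq_smul_volume_pi (hdet ▸ hvw), hdet, lintegral_smul_measure,
        smul_eq_mul]

theorem lintegral_prod_mul_lintegral_slices {α β : Type*} [MeasurableSpace α] [MeasurableSpace β]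
    {μ : Measure α} {ν : Measure β} [SFinite μ] [SFinite ν]
    {H : α × β → ℝ≥0∞} (hH : Measurable H) :
    ∫⁻ z, (∫⁻ a, H (a, z.2) ∂μ) * (∫⁻ b, H (z.1, b) ∂ν) ∂(μ.prod ν) =
      (∫⁻ z, H z ∂(μ.prod ν)) ^ 2 := by
  simp_rw [mul_comm (∫⁻ a, H (a, _) ∂μ)]
  rw [lintegral_prod_mul hH.lintegral_prod_right'.aemeasurable
      hH.lintegral_prod_left'.aemeasurable, ← lintegral_prod _ hH.aemeasurable,
    ← lintegral_prod_symm _ hH.aemeasurable, sq]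

theorem measurable_lintegral_line {h : (Fin 2 → ℝ) → ℝ≥0∞} (hh : Measurable h) (v : Fin 2 → ℝ) :
    Measurable fun p => ∫⁻ t : ℝ, h (p + t • v) :=
  Measurable.lintegral_prod_right' (f := fun z : (Fin 2 → ℝ) × ℝ => h (z.1 + z.2 • v))
    (hh.comp (by fun_prop))

theorem lintegral_mul_lintegral_lines (v w : Fin 2 → ℝ) (hvw : v 0 * w 1 - w 0 * v 1 ≠ 0)
    {h : (Fin 2 → ℝ) → ℝ≥0∞} (hh : Measurable h) :
    ∫⁻ p, (∫⁻ t : ℝ, h (p + t • v)) * (∫⁻ t : ℝ, h (p + t • w)) =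
      ENNReal.ofReal |(v 0 * w 1 - w 0 * v 1)⁻¹| * (∫⁻ p, h p) ^ 2 := by
  set c := ENNReal.ofReal |(v 0 * w 1 - w 0 * v 1)⁻¹| with hc
  have hc0 : c ≠ 0 := by
    simpa only [hc, ne_eq, ENNReal.ofReal_eq_zero, not_le, abs_pos, inv_eq_zero] using hvw
  set H : ℝ × ℝ → ℝ≥0∞ := fun z => h (z.1 • v + z.2 • w)
  have hHm : Measurable H := hh.comp (by fun_prop)
  have hv (z : ℝ × ℝ) : ∫⁻ t : ℝ, h (z.1 • v + z.2 • w + t • v) = ∫⁻ t, H (t, z.2) := by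
    rw [← lintegral_add_left_eq_self (fun t => H (t, z.2)) z.1]
    exact lintegral_congr fun t => congrArg h (by module)
  have hw (z : ℝ × ℝ) : ∫⁻ t : ℝ, h (z.1 • v + z.2 • w + t • w) = ∫⁻ t, H (z.1, t) := by
    rw [← lintegral_add_left_eq_self (fun t => H (z.1, t)) z.2]
    exact lintegral_congr fun t => congrArg h (by module)
  have hchange := lintegral_comp_smul_add_smul v w hvw
    ((measurable_lintegral_line hh v).mul (measurable_lintegral_line hh w))
  simp only [Pi.mul_apply, hv, hw] at hchange
  have key : c * ∫⁻ p, (∫⁻ t : ℝ, h (p + t • v)) * (∫⁻ t : ℝ, h (p + t • w)) =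
      c * (c * (∫⁻ p, h p) ^ 2) := by
    rw [← hchange, Measure.volume_eq_prod, lintegral_prod_mul_lintegral_slices hHm,
      ← Measure.volume_eq_prod, lintegral_comp_smul_add_smul v w hvw hh]
    ring
  exact (ENNReal.mul_right_inj hc0 ENNReal.ofReal_ne_top).1 key

end LineIntegral

section Segment

variable {E F : Type*} [NormedAddCommGroup E] [NormedSpace ℝ E]
  [NormedAddCommGroup F] [NormedSpace ℝ F] {D : Set E} {f : E → F} {p v : E} {c : ℝ}

theorem enorm_le_enorm_add_lintegral_segment (hD : IsOpen D) (hf : ContDiffOn ℝ 1 f D)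
    (hv : ‖v‖ ≤ 1) {t : ℝ} (ht : t ∈ Icc 0 c) (hp : ∀ s ∈ Icc 0 c, p + s • v ∈ D) :
    ‖f p‖ₑ ≤ ‖f (p + t • v)‖ₑ + ∫⁻ s in Icc 0 c, ‖fderiv ℝ f (p + s • v)‖ₑ := by
  have hIcc : Icc 0 t ⊆ Icc 0 c := Icc_subset_Icc_right ht.2
  have hdiff : ContDiffOn ℝ 1 (fun s : ℝ => f (p + s • v)) (Icc 0 t) :=
    hf.comp (by fun_prop) fun s hs => hp s (hIcc hs)
  have hderiv : ∀ s ∈ Icc 0 t,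
      ‖deriv (fun s : ℝ => f (p + s • v)) s‖ₑ ≤ ‖fderiv ℝ f (p + s • v)‖ₑ := fun s hs => by
    have hfd := ((hf.contDiffAt (hD.mem_nhds (hp s (hIcc hs)))).differentiableAt
      one_ne_zero).hasFDerivAt
    have hline : HasDerivAt (fun s : ℝ => p + s • v) v s := by
      simpa using ((hasDerivAt_id s).smul_const v).const_add p
    have hcomp : HasDerivAt (fun s : ℝ => f (p + s • v)) (fderiv ℝ f (p + s • v) v) s :=
      hfd.comp_hasDerivAt s hline
    rw [hcomp.deriv, enorm_le_iff_norm_le]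
    exact ((fderiv ℝ f _).le_opNorm v).trans (mul_le_of_le_one_right (norm_nonneg _) hv)
  have hsub := enorm_sub_le_lintegral_deriv_of_contDiffOn_Icc hdiff ht.1
  simp only [zero_smul, add_zero] at hsub
  calc ‖f p‖ₑ = ‖f (p + t • v) - (f (p + t • v) - f p)‖ₑ := by rw [sub_sub_cancel]
    _ ≤ ‖f (p + t • v)‖ₑ + ‖f (p + t • v) - f p‖ₑ := enorm_sub_le
    _ ≤ _ := by
      gcongr
      exact hsub.trans ((setLIntegral_mono' measurableSet_Icc hderiv).trans
        (lintegral_mono_set hIcc))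

theorem enorm_le_lintegral_segment (hD : IsOpen D) (hf : ContDiffOn ℝ 1 f D)
    (hv : ‖v‖ ≤ 1) (hc : 0 < c) (hp : ∀ s ∈ Icc 0 c, p + s • v ∈ D) :
    ‖f p‖ₑ ≤ ∫⁻ s in Icc 0 c,
      ((ENNReal.ofReal c)⁻¹ * ‖f (p + s • v)‖ₑ + ‖fderiv ℝ f (p + s • v)‖ₑ) := by
  set a := ENNReal.ofReal c with ha
  have ha0 : a ≠ 0 := by simpa only [ha, ne_eq, ENNReal.ofReal_eq_zero, not_le] using hc
  have haT : a ≠ ∞ := ENNReal.ofReal_ne_top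
  have hmean : ∫⁻ _ in Icc 0 c, ‖f p‖ₑ ≤ ∫⁻ s in Icc 0 c, (‖f (p + s • v)‖ₑ +
      ∫⁻ s in Icc 0 c, ‖fderiv ℝ f (p + s • v)‖ₑ) :=
    setLIntegral_mono' measurableSet_Icc fun t ht =>
      enorm_le_enorm_add_lintegral_segment hD hf hv ht hp
  have hcont : ContinuousOn (fun s : ℝ => ‖f (p + s • v)‖ₑ) (Icc 0 c) :=
    (hf.continuousOn.comp (by fun_prop) hp).enorm
  have hmeas := hcont.aemeasurable measurableSet_Icc (μ := volume)
  rw [lintegral_add_left' hmeas, setLIntegral_const, setLIntegral_const, Real.volume_Icc, sub_zero,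
    ← ha] at hmean
  rw [lintegral_add_left' (hmeas.const_mul _), lintegral_const_mul'' _ hmeas]
  calc ‖f p‖ₑ = a⁻¹ * (‖f p‖ₑ * a) := by
        rw [mul_comm ‖f p‖ₑ, ← mul_assoc, ENNReal.inv_mul_cancel ha0 haT, one_mul]
    _ ≤ a⁻¹ * (_ + _ * a) := by gcongr
    _ = _ := by
      rw [mul_add, mul_comm _ a, ← mul_assoc a⁻¹ a, ENNReal.inv_mul_cancel ha0 haT, one_mul]

theorem setLIntegral_segment_le_lintegral_line (hp : ∀ s ∈ Icc 0 c, p + s • v ∈ D)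
    (g : E → ℝ≥0∞) :
    ∫⁻ s in Icc 0 c, g (p + s • v) ≤ ∫⁻ s : ℝ, D.indicator g (p + s • v) := by
  rw [← lintegral_indicator measurableSet_Icc]
  refine lintegral_mono fun s => ?_
  by_cases hs : s ∈ Icc 0 c
  · rw [indicator_of_mem hs, indicator_of_mem (hp s hs)]
  · rw [indicator_of_notMem hs]; exact zero_le

end Segment

section SobolevOne

/-- A cover of `D` by finitely many sectors, such that from each point of a sector start two
segments of a fixed length inside `D`, in two transverse directions depending on the sector only,
the first of which ends in a fixed compact subset of `D`. It is the form of the cone condition used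
for the Sobolev inequalities below. -/
structure PlanarConeCover (D : Set (Fin 2 → ℝ)) (ι : Type*) where
  sector : ι → Set (Fin 2 → ℝ)
  (v w : ι → Fin 2 → ℝ)
  c : ℝ
  K : Set (Fin 2 → ℝ)
  c_pos : 0 < c
  subset_iUnion : D ⊆ ⋃ i, sector i
  norm_v_le (i) : ‖v i‖ ≤ 1
  norm_w_le (i) : ‖w i‖ ≤ 1
  transverse (i) : v i 0 * w i 1 - w i 0 * v i 1 ≠ 0
  segment_v (i) : ∀ p ∈ sector i, ∀ s ∈ Icc 0 c, p + s • v i ∈ D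
  segment_w (i) : ∀ p ∈ sector i, ∀ s ∈ Icc 0 c, p + s • w i ∈ D
  isCompact_K : IsCompact K
  K_subset : K ⊆ D
  endpoint_mem (i) : ∀ p ∈ sector i, p + c • v i ∈ K

theorem measurable_indicator_of_continuousOn {X Y : Type*} [TopologicalSpace X] [MeasurableSpace X]
    [OpensMeasurableSpace X] [TopologicalSpace Y] [MeasurableSpace Y] [BorelSpace Y] [Zero Y]
    {s : Set X} {f : X → Y} (hf : ContinuousOn f s) (hs : MeasurableSet s) :
    Measurable (s.indicator f) := by
  classical
  rw [← piecewise_eq_indicator]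
  exact hf.measurable_piecewise continuousOn_const hs

variable {ι F : Type*} [NormedAddCommGroup F] [NormedSpace ℝ F]
  {D : Set (Fin 2 → ℝ)} {f : (Fin 2 → ℝ) → F}

namespace PlanarConeCover

theorem setLIntegral_sector_sq_le (P : PlanarConeCover D ι) (hD : IsOpen D)
    (hf : ContDiffOn ℝ 1 f D) (i : ι) :
    ∫⁻ p in P.sector i, ‖f p‖ₑ ^ 2 ≤
      ENNReal.ofReal |(P.v i 0 * P.w i 1 - P.w i 0 * P.v i 1)⁻¹| *
        ((ENNReal.ofReal P.c)⁻¹ * (∫⁻ p in D, ‖f p‖ₑ) + ∫⁻ p in D, ‖fderiv ℝ f p‖ₑ) ^ 2 := by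
  set a := (ENNReal.ofReal P.c)⁻¹
  have ha : a ≠ ∞ := ENNReal.inv_ne_top.2 (ENNReal.ofReal_pos.2 P.c_pos).ne'
  set g : (Fin 2 → ℝ) → ℝ≥0∞ := fun y => a * ‖f y‖ₑ + ‖fderiv ℝ f y‖ₑ
  have hfe : ContinuousOn (fun y => ‖f y‖ₑ) D := hf.continuousOn.enorm
  have hg : ContinuousOn g D :=
    ((ENNReal.continuous_const_mul ha).comp_continuousOn hfe).add
      (hf.continuousOn_fderiv_of_isOpen hD le_rfl).enorm
  have hgm : Measurable (D.indicator g) := measurable_indicator_of_continuousOn hg hD.measurableSet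
  have hline {p d : Fin 2 → ℝ} (hd : ‖d‖ ≤ 1) (hp : ∀ s ∈ Icc 0 P.c, p + s • d ∈ D) :
      ‖f p‖ₑ ≤ ∫⁻ s : ℝ, D.indicator g (p + s • d) :=
    (enorm_le_lintegral_segment hD hf hd P.c_pos hp).trans
      (setLIntegral_segment_le_lintegral_line hp g)
  calc ∫⁻ p in P.sector i, ‖f p‖ₑ ^ 2
      ≤ ∫⁻ p in P.sector i, (∫⁻ s : ℝ, D.indicator g (p + s • P.v i)) *
          ∫⁻ s : ℝ, D.indicator g (p + s • P.w i) :=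
        setLIntegral_mono
          ((measurable_lintegral_line hgm _).mul (measurable_lintegral_line hgm _)) fun p hp => by
          rw [sq]
          exact mul_le_mul' (hline (P.norm_v_le i) (P.segment_v i p hp))
            (hline (P.norm_w_le i) (P.segment_w i p hp))
    _ ≤ ∫⁻ p, (∫⁻ s : ℝ, D.indicator g (p + s • P.v i)) *
          ∫⁻ s : ℝ, D.indicator g (p + s • P.w i) := setLIntegral_le_lintegral _ _
    _ = _ := by
      rw [lintegral_mul_lintegral_lines _ _ (P.transverse i) hgm,
        lintegral_indicator hD.measurableSet,
        lintegral_add_left' ((hfe.aemeasurable hD.measurableSet).const_mul a),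
        lintegral_const_mul'' a (hfe.aemeasurable hD.measurableSet)]

theorem setLIntegral_le_sum [Fintype ι] (P : PlanarConeCover D ι) (g : (Fin 2 → ℝ) → ℝ≥0∞) :
    ∫⁻ p in D, g p ≤ ∑ i, ∫⁻ p in P.sector i, g p :=
  (lintegral_mono_set P.subset_iUnion).trans <|
    (lintegral_iUnion_le _ _).trans_eq (tsum_fintype _)

theorem eLpNorm_two_le [Finite ι] (P : PlanarConeCover D ι) (hD : IsOpen D) : ∃ C : ℝ≥0,
    ∀ f : (Fin 2 → ℝ) → F, ContDiffOn ℝ 1 f D →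
      eLpNorm f 2 (volume.restrict D) ≤
        C * (eLpNorm f 1 (volume.restrict D) + eLpNorm (fderiv ℝ f) 1 (volume.restrict D)) := by
  cases nonempty_fintype ι
  set κ : ι → ℝ≥0 := fun i => Real.toNNReal |(P.v i 0 * P.w i 1 - P.w i 0 * P.v i 1)⁻¹|
  set b : ℝ≥0 := max 1 (Real.toNNReal P.c)⁻¹
  have hb : (ENNReal.ofReal P.c)⁻¹ ≤ b := by
    rw [ENNReal.ofReal, ← ENNReal.coe_inv (Real.toNNReal_pos.2 P.c_pos).ne']
    exact_mod_cast le_max_right _ _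
  have hb1 : (1 : ℝ≥0∞) ≤ b := by exact_mod_cast le_max_left _ _
  refine ⟨max 1 (∑ i, κ i) * b, fun f hf => ?_⟩
  set X := eLpNorm f 1 (volume.restrict D) + eLpNorm (fderiv ℝ f) 1 (volume.restrict D) with hX
  have hκ : ((∑ i, κ i : ℝ≥0) : ℝ≥0∞) ≤ (max 1 (∑ i, κ i) : ℝ≥0) ^ 2 := by
    have h1 : (1 : ℝ≥0) ≤ max 1 (∑ i, κ i) := le_max_left _ _
    exact_mod_cast (le_max_right _ _).trans (le_self_pow₀ h1 two_ne_zero)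
  have hbX : (ENNReal.ofReal P.c)⁻¹ * (∫⁻ p in D, ‖f p‖ₑ) + ∫⁻ p in D, ‖fderiv ℝ f p‖ₑ ≤ b * X := by
    rw [hX, mul_add, eLpNorm_one_eq_lintegral_enorm, eLpNorm_one_eq_lintegral_enorm]
    gcongr
    exact le_mul_of_one_le_left' hb1
  rw [← ENNReal.pow_le_pow_left_iff two_ne_zero]
  calc eLpNorm f 2 (volume.restrict D) ^ 2
      = ∫⁻ p in D, ‖f p‖ₑ ^ 2 := by
        simpa using eLpNorm_nnreal_pow_eq_lintegral (p := 2) (f := f) (μ := volume.restrict D)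
          two_ne_zero
    _ ≤ ∑ i, ∫⁻ p in P.sector i, ‖f p‖ₑ ^ 2 := P.setLIntegral_le_sum _
    _ ≤ ∑ i, κ i * (b * X) ^ 2 := by
      gcongr with i
      exact (P.setLIntegral_sector_sq_le hD hf i).trans (by gcongr; rfl)
    _ = (∑ i, κ i : ℝ≥0) * (b * X) ^ 2 := by rw [← Finset.sum_mul, ENNReal.ofNNReal_finsetSum]
    _ ≤ (max 1 (∑ i, κ i) : ℝ≥0) ^ 2 * (b * X) ^ 2 := by gcongr
    _ = _ := by rw [ENNReal.coe_mul]; ring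

end PlanarConeCover

end SobolevOne

section SobolevTwo

theorem eLpNorm_pow_eq {α 𝕜 : Type*} [MeasurableSpace α] {μ : Measure α} [NormedDivisionRing 𝕜]
    (f : α → 𝕜) {n : ℕ} (hn : n ≠ 0) (p : ℝ≥0∞) :
    eLpNorm (fun x => f x ^ n) p μ = eLpNorm f (p * n) μ ^ n := by
  have h := eLpNorm_norm_rpow (μ := μ) (p := p) f (q := n) (by positivity)
  rw [ENNReal.ofReal_natCast, ENNReal.rpow_natCast] at h
  rw [← h, ← eLpNorm_norm]
  simp only [norm_pow, Real.rpow_natCast]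

theorem eLpNorm_one_smul_le {α E : Type*} [MeasurableSpace α] {μ : Measure α}
    [NormedAddCommGroup E] [NormedSpace ℝ E] {φ : α → ℝ} {f : α → E}
    (hφ : AEStronglyMeasurable φ μ) (hf : AEStronglyMeasurable f μ) :
    eLpNorm (φ • f) 1 μ ≤ eLpNorm φ 2 μ * eLpNorm f 2 μ :=
  eLpNorm_smul_le_mul_eLpNorm hf hφ

theorem eLpNorm_fderiv_pow_le {E : Type*} [NormedAddCommGroup E] [NormedSpace ℝ E]
    [MeasurableSpace E] [BorelSpace E] [SecondCountableTopology E] {D : Set E} {μ : Measure E}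
    (hD : IsOpen D) {f : E → ℝ} (hf : ContDiffOn ℝ 1 f D) (n : ℕ) :
    eLpNorm (fderiv ℝ fun x => f x ^ (n + 1)) 1 (μ.restrict D) ≤
      (n + 1) * (eLpNorm (fun x => f x ^ n) 2 (μ.restrict D) *
        eLpNorm (fderiv ℝ f) 2 (μ.restrict D)) := by
  have hderiv : ∀ᵐ x ∂μ.restrict D, ‖fderiv ℝ (fun x => f x ^ (n + 1)) x‖ ≤
      (n + 1 : ℕ) * ‖((fun x => f x ^ n) • fderiv ℝ f) x‖ := by
    filter_upwards [self_mem_ae_restrict hD.measurableSet] with x hx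
    have hfx := (hf.contDiffAt (hD.mem_nhds hx)).differentiableAt one_ne_zero
    rw [fderiv_fun_pow _ hfx, Pi.smul_apply', nsmul_eq_mul, norm_smul, norm_smul, norm_mul,
      Real.norm_natCast, mul_assoc, add_tsub_cancel_right]
  refine (eLpNorm_le_mul_eLpNorm_of_ae_le_mul hderiv 1).trans ?_
  rw [ENNReal.ofReal_natCast, Nat.cast_succ]
  gcongr
  exact eLpNorm_one_smul_le (φ := fun x => f x ^ n) (f := fderiv ℝ f)
    ((hf.continuousOn.pow n).aestronglyMeasurable hD.measurableSet)
    ((hf.continuousOn_fderiv_of_isOpen hD le_rfl).aestronglyMeasurable hD.measurableSet)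

namespace PlanarConeCover

variable {ι : Type*} [Finite ι] {D : Set (Fin 2 → ℝ)}

theorem eLpNorm_pow_succ_le (P : PlanarConeCover D ι) (hD : IsOpen D) (n : ℕ) : ∃ C : ℝ≥0,
    ∀ f : (Fin 2 → ℝ) → ℝ, ContDiffOn ℝ 1 f D →
      eLpNorm (fun x => f x ^ (n + 1)) 2 (volume.restrict D) ≤
        C * eLpNorm (fun x => f x ^ n) 2 (volume.restrict D) *
          (eLpNorm f 2 (volume.restrict D) + eLpNorm (fderiv ℝ f) 2 (volume.restrict D)) := by
  obtain ⟨C, hC⟩ := P.eLpNorm_two_le (F := ℝ) hD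
  refine ⟨C * (n + 1), fun f hf => ?_⟩
  have hmeas {g : (Fin 2 → ℝ) → ℝ} (hg : ContinuousOn g D) :
      AEStronglyMeasurable g (volume.restrict D) := hg.aestronglyMeasurable hD.measurableSet
  have hpow : eLpNorm (fun x => f x ^ (n + 1)) 1 (volume.restrict D) ≤
      (n + 1) * (eLpNorm (fun x => f x ^ n) 2 (volume.restrict D) *
        eLpNorm f 2 (volume.restrict D)) :=
    (eLpNorm_one_smul_le (hmeas (hf.continuousOn.pow n)) (hmeas hf.continuousOn)).trans
      (le_mul_of_one_le_left' le_add_self)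
  calc eLpNorm (fun x => f x ^ (n + 1)) 2 (volume.restrict D)
      ≤ C * _ := hC _ (hf.pow (n + 1))
    _ ≤ C * ((n + 1) * _ + (n + 1) * _) :=
       mul_le_mul_right (add_le_add hpow (eLpNorm_fderiv_pow_le hD hf n)) _
    _ = _ := by push_cast; ring

/-- Applying `W^{1,1} ⊆ L²` to one more power of `f` raises the exponent by two. -/
theorem eLpNorm_two_mul_le (P : PlanarConeCover D ι) (hD : IsOpen D) (n : ℕ) : ∃ C : ℝ≥0,
    ∀ f : (Fin 2 → ℝ) → ℝ, ContDiffOn ℝ 1 f D →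
      eLpNorm f (2 * (n + 1 : ℕ)) (volume.restrict D) ≤
        C * (eLpNorm f 2 (volume.restrict D) + eLpNorm (fderiv ℝ f) 2 (volume.restrict D)) := by
  induction n with
  | zero => exact ⟨1, fun f _ => by simp⟩
  | succ n ih =>
    obtain ⟨A, hA⟩ := ih
    obtain ⟨B, hB⟩ := P.eLpNorm_pow_succ_le hD (n + 1)
    refine ⟨max A B, fun f hf => ?_⟩
    have hn := hA f hf
    have hstep := hB f hf
    rw [eLpNorm_pow_eq f (by positivity), eLpNorm_pow_eq f (by positivity)] at hstep
    set W := eLpNorm f 2 (volume.restrict D) + eLpNorm (fderiv ℝ f) 2 (volume.restrict D)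
    rw [← ENNReal.pow_le_pow_left_iff (n := n + 1 + 1) (by positivity)]
    calc _ ≤ _ := hstep
      _ ≤ (max A B : ℝ≥0) * ((max A B : ℝ≥0) * W) ^ (n + 1) * W := by
        gcongr
        · exact le_max_right A B
        · exact hn.trans (by gcongr; exact le_max_left A B)
      _ = _ := by ring

end PlanarConeCover

end SobolevTwo

section Integrability

theorem lintegral_segments_le (v : Fin 2 → ℝ) (c : ℝ) {g : (Fin 2 → ℝ) → ℝ≥0∞}
    (hg : Measurable g) (S : Set (Fin 2 → ℝ)) :
    ∫⁻ p in S, ∫⁻ s in Icc 0 c, g (p + s • v) ≤ ENNReal.ofReal c * ∫⁻ p, g p := by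
  calc ∫⁻ p in S, ∫⁻ s in Icc 0 c, g (p + s • v)
      ≤ ∫⁻ p, ∫⁻ s in Icc 0 c, g (p + s • v) := setLIntegral_le_lintegral _ _
    _ = ∫⁻ s in Icc 0 c, ∫⁻ p, g (p + s • v) :=
      lintegral_lintegral_swap (hg.comp (by fun_prop)).aemeasurable
    _ = ENNReal.ofReal c * ∫⁻ p, g p := by
      simp_rw [lintegral_add_right_eq_self g]
      rw [setLIntegral_const, Real.volume_Icc, sub_zero, mul_comm]

namespace PlanarConeCover

variable {ι F : Type*} [NormedAddCommGroup F] [NormedSpace ℝ F]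
  {D : Set (Fin 2 → ℝ)} {f : (Fin 2 → ℝ) → F}

theorem setLIntegral_sector_lt_top (P : PlanarConeCover D ι) (hD : IsOpen D)
    (hvol : volume D ≠ ∞) (hf : ContDiffOn ℝ 1 f D) (hDf : ∫⁻ p in D, ‖fderiv ℝ f p‖ₑ < ∞) (i : ι) :
    ∫⁻ p in P.sector i, ‖f p‖ₑ < ∞ := by
  obtain ⟨M, hM⟩ := P.isCompact_K.exists_bound_of_continuousOn (hf.continuousOn.mono P.K_subset)
  have hsub : P.sector i ⊆ D := fun p hp => by
    simpa using P.segment_v i p hp 0 (left_mem_Icc.2 P.c_pos.le)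
  set g := D.indicator fun y => ‖fderiv ℝ f y‖ₑ
  have hg : Measurable g := measurable_indicator_of_continuousOn
    (hf.continuousOn_fderiv_of_isOpen hD le_rfl).enorm hD.measurableSet
  have hgm : Measurable fun p => ∫⁻ s in Icc 0 P.c, g (p + s • P.v i) :=
    Measurable.lintegral_prod_right' (f := fun z : (Fin 2 → ℝ) × ℝ => g (z.1 + z.2 • P.v i))
      (hg.comp (by fun_prop))
  have hpt : ∀ p ∈ P.sector i,
      ‖f p‖ₑ ≤ ENNReal.ofReal M + ∫⁻ s in Icc 0 P.c, g (p + s • P.v i) := fun p hp => by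
    have hseg := P.segment_v i p hp
    refine (enorm_le_enorm_add_lintegral_segment hD hf (P.norm_v_le i)
      (right_mem_Icc.2 P.c_pos.le) hseg).trans (add_le_add ?_ ?_)
    · rw [← ofReal_norm]
      exact ENNReal.ofReal_le_ofReal (hM _ (P.endpoint_mem i p hp))
    · exact setLIntegral_mono' measurableSet_Icc fun s hs =>
        (indicator_of_mem (hseg s hs) fun y => ‖fderiv ℝ f y‖ₑ).ge
  calc ∫⁻ p in P.sector i, ‖f p‖ₑ
      ≤ ∫⁻ p in P.sector i, (ENNReal.ofReal M + ∫⁻ s in Icc 0 P.c, g (p + s • P.v i)) :=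
        setLIntegral_mono (measurable_const.add hgm) hpt
    _ ≤ ENNReal.ofReal M * volume D + ENNReal.ofReal P.c * ∫⁻ p, g p := by
      rw [lintegral_add_left measurable_const, setLIntegral_const]
      gcongr
      exact lintegral_segments_le _ _ hg _
    _ < ∞ := by
      rw [lintegral_indicator hD.measurableSet]
      exact ENNReal.add_lt_top.2 ⟨ENNReal.mul_lt_top ENNReal.ofReal_lt_top hvol.lt_top,
        ENNReal.mul_lt_top ENNReal.ofReal_lt_top hDf⟩

variable [Finite ι]

theorem memLp_one_of_fderiv (P : PlanarConeCover D ι) (hD : IsOpen D) (hvol : volume D ≠ ∞)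
    (hf : ContDiffOn ℝ 1 f D) (hDf : MemLp (fderiv ℝ f) 1 (volume.restrict D)) :
    MemLp f 1 (volume.restrict D) := by
  refine ⟨hf.continuousOn.aestronglyMeasurable hD.measurableSet, ?_⟩
  cases nonempty_fintype ι
  have hDf' := hDf.eLpNorm_lt_top
  rw [eLpNorm_one_eq_lintegral_enorm] at hDf' ⊢
  exact (P.setLIntegral_le_sum _).trans_lt <| ENNReal.sum_lt_top.2 fun i _ =>
    P.setLIntegral_sector_lt_top hD hvol hf hDf' i

theorem memLp_two_mul_of_fderiv (P : PlanarConeCover D ι) (hD : IsOpen D) (hvol : volume D ≠ ∞)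
    {f : (Fin 2 → ℝ) → ℝ} (hf : ContDiffOn ℝ 1 f D)
    (hDf : MemLp (fderiv ℝ f) 2 (volume.restrict D)) (n : ℕ) :
    MemLp f (2 * (n + 1 : ℕ)) (volume.restrict D) := by
  have : IsFiniteMeasure (volume.restrict D) := isFiniteMeasure_restrict.2 hvol
  have hDf1 : MemLp (fderiv ℝ f) 1 (volume.restrict D) := hDf.mono_exponent one_le_two
  have hf1 := P.memLp_one_of_fderiv hD hvol hf hDf1
  obtain ⟨A, hA⟩ := P.eLpNorm_two_le (F := ℝ) hD
  obtain ⟨B, hB⟩ := P.eLpNorm_two_mul_le hD n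
  have hf2 : eLpNorm f 2 (volume.restrict D) < ∞ := (hA f hf).trans_lt <|
    ENNReal.mul_lt_top ENNReal.coe_lt_top <|
      ENNReal.add_lt_top.2 ⟨hf1.eLpNorm_lt_top, hDf1.eLpNorm_lt_top⟩
  exact ⟨hf1.aestronglyMeasurable, (hB f hf).trans_lt <| ENNReal.mul_lt_top ENNReal.coe_lt_top <|
    ENNReal.add_lt_top.2 ⟨hf2, hDf.eLpNorm_lt_top⟩⟩

end PlanarConeCover

end Integrability

section Disk

theorem mem_Dr {r : ℝ} {x : Fin 2 → ℝ} : x ∈ Dr r ↔ x 0 ^ 2 + x 1 ^ 2 < r ^ 2 := Iff.rfl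

theorem isOpen_Dr (r : ℝ) : IsOpen (Dr r) := isOpen_lt (by fun_prop) (by fun_prop)

theorem norm_le_of_sq_add_sq_le {r : ℝ} (hr : 0 ≤ r) {x : Fin 2 → ℝ}
    (hx : x 0 ^ 2 + x 1 ^ 2 ≤ r ^ 2) : ‖x‖ ≤ r := by
  refine (pi_norm_le_iff_of_nonneg hr).2 (Fin.forall_fin_two.2 ⟨?_, ?_⟩)
  · exact abs_le_of_sq_le_sq (by nlinarith [sq_nonneg (x 1)]) hr
  · exact abs_le_of_sq_le_sq (by nlinarith [sq_nonneg (x 0)]) hr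

theorem volume_Dr_ne_top {r : ℝ} (hr : 0 ≤ r) : volume (Dr r) ≠ ∞ :=
  measure_ne_top_of_subset
    (fun _ hx => mem_closedBall_zero_iff.2 (norm_le_of_sq_add_sq_le hr (mem_Dr.1 hx).le))
    (measure_closedBall_lt_top (x := (0 : Fin 2 → ℝ)) (r := r)).ne

theorem sq_add_sq_retract_lt {r x y t : ℝ} (hx : 0 ≤ x) (hy : 0 ≤ y) (h : x ^ 2 + y ^ 2 < r ^ 2)
    (ht : t ∈ Icc 0 (r / 2)) : (x - t) ^ 2 + (y - t / 2) ^ 2 < r ^ 2 := by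
  obtain ⟨ht0, htr⟩ := ht
  rcases le_total (5 / 4 * t) (2 * x + y) with hq | hq
  · nlinarith
  · nlinarith [mul_nonneg hx hy]

theorem sq_add_sq_retract_le {r x y : ℝ} (hr : 0 < r) (hx : 0 ≤ x) (hy : 0 ≤ y)
    (h : x ^ 2 + y ^ 2 < r ^ 2) :
    (x - r / 2) ^ 2 + (y - r / 2 / 2) ^ 2 ≤ 15 / 16 * r ^ 2 := by
  rcases le_total (3 / 4 * r) (2 * x + y) with hq | hq
  · nlinarith
  · nlinarith [mul_nonneg hx hy]

theorem abs_unitsInt (σ : ℤˣ) : |(σ : ℝ)| = 1 := by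
  rcases Int.units_eq_one_or σ with rfl | rfl <;> norm_num

theorem sq_unitsInt (σ : ℤˣ) : (σ : ℝ) ^ 2 = 1 := by
  rw [← sq_abs, abs_unitsInt, one_pow]

theorem exists_unitsInt_mul_nonneg (x : ℝ) : ∃ σ : ℤˣ, 0 ≤ (σ : ℝ) * x := by
  rcases le_total 0 x with h | h
  exacts [⟨1, by simpa using h⟩, ⟨-1, by simpa using h⟩]

theorem isCompact_setOf_sq_add_sq_le (a : ℝ) :
    IsCompact {x : Fin 2 → ℝ | x 0 ^ 2 + x 1 ^ 2 ≤ a} := by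
  refine Metric.isCompact_of_isClosed_isBounded (isClosed_le (by fun_prop) (by fun_prop)) ?_
  refine (Metric.isBounded_closedBall (x := 0) (r := √a)).subset fun x (hx : _ ≤ a) => ?_
  refine mem_closedBall_zero_iff.2 (norm_le_of_sq_add_sq_le (Real.sqrt_nonneg a) ?_)
  rwa [Real.sq_sqrt (le_trans (by positivity) hx)]

theorem norm_vec_unitsInt_mul_le (σ τ : ℤˣ) {a b : ℝ} (ha : |a| ≤ 1) (hb : |b| ≤ 1) :
    ‖![σ * a, τ * b]‖ ≤ 1 := by
  refine (pi_norm_le_iff_of_nonneg zero_le_one).2 (Fin.forall_fin_two.2 ⟨?_, ?_⟩) <;>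
    simpa [abs_mul, abs_unitsInt]

/-- The cone cover of the disk by its intersections with the four closed quadrants. The point `p`
of the quadrant with signs `σ` moves along `-(σ₀, σ₁ / 2)` and along `-(σ₀ / 2, σ₁)`. -/
def diskConeCover {r : ℝ} (hr : 0 < r) : PlanarConeCover (Dr r) (Fin 2 → ℤˣ) where
  sector σ := {p ∈ Dr r | ∀ i, 0 ≤ (σ i : ℝ) * p i}
  v σ := ![σ 0 * (-1), σ 1 * (-1 / 2)]
  w σ := ![σ 0 * (-1 / 2), σ 1 * (-1)]
  c := r / 2
  K := {x | x 0 ^ 2 + x 1 ^ 2 ≤ 15 / 16 * r ^ 2}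
  c_pos := half_pos hr
  subset_iUnion p hp := by
    choose σ hσ using fun i => exists_unitsInt_mul_nonneg (p i)
    exact mem_iUnion.2 ⟨σ, hp, hσ⟩
  norm_v_le σ := norm_vec_unitsInt_mul_le _ _ (by norm_num [abs_of_pos]) (by norm_num [abs_of_pos])
  norm_w_le σ := norm_vec_unitsInt_mul_le _ _ (by norm_num [abs_of_pos]) (by norm_num [abs_of_pos])
  transverse σ h := by
    have hprod : (σ 0 : ℝ) ^ 2 * (σ 1 : ℝ) ^ 2 = 1 := by simp only [sq_unitsInt, mul_one]
    simp only [Matrix.cons_val_zero, Matrix.cons_val_one] at h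
    nlinarith
  segment_v σ := by
    rintro p ⟨hp, hσ⟩ s hs
    have hmem := sq_add_sq_retract_lt (r := r) (hσ 0) (hσ 1)
      (by simpa only [mul_pow, sq_unitsInt, one_mul] using mem_Dr.1 hp) hs
    refine lt_of_eq_of_lt ?_ hmem
    simp only [Pi.add_apply, Pi.smul_apply, smul_eq_mul, Matrix.cons_val_zero, Matrix.cons_val_one]
    linear_combination (s ^ 2 - p 0 ^ 2) * sq_unitsInt (σ 0) +
      (s ^ 2 / 4 - p 1 ^ 2) * sq_unitsInt (σ 1)
  segment_w σ := by
    rintro p ⟨hp, hσ⟩ s hs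
    have hmem := sq_add_sq_retract_lt (r := r) (hσ 1) (hσ 0)
      (by simpa only [mul_pow, sq_unitsInt, one_mul, add_comm] using mem_Dr.1 hp) hs
    refine lt_of_eq_of_lt ?_ hmem
    simp only [Pi.add_apply, Pi.smul_apply, smul_eq_mul, Matrix.cons_val_zero, Matrix.cons_val_one]
    linear_combination (s ^ 2 / 4 - p 0 ^ 2) * sq_unitsInt (σ 0) +
      (s ^ 2 - p 1 ^ 2) * sq_unitsInt (σ 1)
  isCompact_K := isCompact_setOf_sq_add_sq_le _
  K_subset x hx := by
    have hx' : x 0 ^ 2 + x 1 ^ 2 ≤ 15 / 16 * r ^ 2 := hx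
    exact hx'.trans_lt (by nlinarith [pow_pos hr 2])
  endpoint_mem σ := by
    rintro p ⟨hp, hσ⟩
    have hmem := sq_add_sq_retract_le hr (hσ 0) (hσ 1)
      (by simpa only [mul_pow, sq_unitsInt, one_mul] using mem_Dr.1 hp)
    refine le_of_eq_of_le ?_ hmem
    simp only [Pi.add_apply, Pi.smul_apply, smul_eq_mul, Matrix.cons_val_zero, Matrix.cons_val_one]
    linear_combination (r ^ 2 / 4 - p 0 ^ 2) * sq_unitsInt (σ 0) +
      (r ^ 2 / 16 - p 1 ^ 2) * sq_unitsInt (σ 1)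

end Disk

section PartialDeriv

variable {F : Type*} [NormedAddCommGroup F] [NormedSpace ℝ F]
  {D : Set (Fin 2 → ℝ)} {x : Fin 2 → ℝ}

/-- The partial derivative `∂ᵢf`; for maps into the ambient space this is `pd f i`. -/
def partialDeriv (i : Fin 2) (f : (Fin 2 → ℝ) → F) (x : Fin 2 → ℝ) : F :=
  fderiv ℝ f x (Pi.single i 1)

theorem pd_eq_partialDeriv {m : ℕ} (f : (Fin 2 → ℝ) → (Fin 2 ⊕ Fin m → ℝ)) (i : Fin 2) :
    pd f i = partialDeriv i f := rfl

theorem partialDeriv_const (i : Fin 2) (c : F) : partialDeriv i (fun _ => c) x = 0 := by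
  simp [partialDeriv]

theorem partialDeriv_add (i : Fin 2) {f g : (Fin 2 → ℝ) → F} (hf : DifferentiableAt ℝ f x)
    (hg : DifferentiableAt ℝ g x) :
    partialDeriv i (fun y => f y + g y) x = partialDeriv i f x + partialDeriv i g x := by
  simp only [partialDeriv, fderiv_fun_add hf hg, add_apply]

theorem partialDeriv_sum {ι : Type*} (s : Finset ι) (i : Fin 2) {f : ι → (Fin 2 → ℝ) → F}
    (hf : ∀ k ∈ s, DifferentiableAt ℝ (f k) x) :
    partialDeriv i (fun y => ∑ k ∈ s, f k y) x = ∑ k ∈ s, partialDeriv i (f k) x := by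
  simp only [partialDeriv, fderiv_fun_sum hf, sum_apply]

theorem partialDeriv_mul (i : Fin 2) {f g : (Fin 2 → ℝ) → ℝ} (hf : DifferentiableAt ℝ f x)
    (hg : DifferentiableAt ℝ g x) :
    partialDeriv i (fun y => f y * g y) x =
      partialDeriv i f x * g x + f x * partialDeriv i g x := by
  simp only [partialDeriv, fderiv_fun_mul hf hg, add_apply, smul_apply, smul_eq_mul]
  ring

theorem partialDeriv_prod {ι : Type*} [DecidableEq ι] (s : Finset ι) (i : Fin 2)
    {f : ι → (Fin 2 → ℝ) → ℝ} (hf : ∀ k ∈ s, DifferentiableAt ℝ (f k) x) :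
    partialDeriv i (fun y => ∏ k ∈ s, f k y) x
      = ∑ a ∈ s, ∏ k ∈ s, Function.update (fun k => f k x) a (partialDeriv i (f a) x) k := by
  have hderiv := HasFDerivAt.finsetProd fun k hk => (hf k hk).hasFDerivAt
  simp only [partialDeriv, hderiv.fderiv, sum_apply, smul_apply, smul_eq_mul]
  refine Finset.sum_congr rfl fun a ha => ?_
  rw [Finset.prod_update_of_mem ha, ← Finset.erase_eq, mul_comm]

theorem partialDeriv_inv (i : Fin 2) {f : (Fin 2 → ℝ) → ℝ} (hf : DifferentiableAt ℝ f x)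
    (h0 : f x ≠ 0) :
    partialDeriv i (fun y => (f y)⁻¹) x = -((f x)⁻¹ * (f x)⁻¹ * partialDeriv i f x) := by
  have hderiv : HasFDerivAt (fun y => (f y)⁻¹) _ x :=
    (hasDerivAt_inv h0).comp_hasFDerivAt x hf.hasFDerivAt
  simp only [partialDeriv, hderiv.fderiv, smul_apply, smul_eq_mul]
  ring

theorem partialDeriv_apply {ι : Type*} [Fintype ι] (i : Fin 2) {f : (Fin 2 → ℝ) → (ι → ℝ)}
    (hf : DifferentiableAt ℝ f x) (a : ι) :
    partialDeriv i f x a = partialDeriv i (fun y => f y a) x := by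
  simp only [partialDeriv, (hasFDerivAt_pi'.1 hf.hasFDerivAt a).fderiv,
    ContinuousLinearMap.comp_apply, ContinuousLinearMap.proj_apply]

theorem partialDeriv_congr (hD : IsOpen D) (i : Fin 2) {f g : (Fin 2 → ℝ) → F} (h : EqOn f g D)
    (hx : x ∈ D) : partialDeriv i f x = partialDeriv i g x := by
  rw [partialDeriv, (h.eventuallyEq_of_mem (hD.mem_nhds hx)).fderiv_eq, partialDeriv]

theorem contDiffOn_partialDeriv (hD : IsOpen D) (i : Fin 2) {f : (Fin 2 → ℝ) → F}
    (hf : ContDiffOn ℝ (⊤ : ℕ∞) f D) : ContDiffOn ℝ (⊤ : ℕ∞) (partialDeriv i f) D :=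
  (hf.fderiv_of_isOpen hD (by simp)).clm_apply contDiffOn_const

end PartialDeriv

section DiffExpr

variable {m : ℕ} {D : Set (Fin 2 → ℝ)} {α : ℝ}

/-- Smooth maps `u : D → ℝᵐ` with `|Du| ≤ α`. -/
def Admissible (D : Set (Fin 2 → ℝ)) (α : ℝ) (u : (Fin 2 → ℝ) → (Fin m → ℝ)) : Prop :=
  ContDiffOn ℝ (⊤ : ℕ∞) u D ∧
    ∀ x ∈ D, ∑ i, ∑ a, (fderiv ℝ u x (Pi.single i 1) a) ^ 2 ≤ α ^ 2

/-- The principal filter of pairs `(u, x)` with `u` admissible and `x ∈ D`: a big-O along it is an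
estimate whose constant depends on `D`, `α`, `m` only. -/
def jetFilter (m : ℕ) (D : Set (Fin 2 → ℝ)) (α : ℝ) :
    Filter (((Fin 2 → ℝ) → (Fin m → ℝ)) × (Fin 2 → ℝ)) :=
  𝓟 {p | Admissible D α p.1 ∧ p.2 ∈ D}

/-- `IsDiffExpr D α N w f`: on admissible `u` and on `D`, `f u x` is an expression in the
derivatives of `u` at `x`, of order at most `N + 1`, in which `Dʲ⁺¹u` carries weight `j` and every
monomial has weight `w`; expressions that are at least `1` may be inverted in weight zero. -/
inductive IsDiffExpr (D : Set (Fin 2 → ℝ)) (α : ℝ) (N : ℕ) :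
    ℕ → (((Fin 2 → ℝ) → (Fin m → ℝ)) → (Fin 2 → ℝ) → ℝ) → Prop
  | const (c : ℝ) : IsDiffExpr D α N 0 (fun _ _ => c)
  | zero (w : ℕ) : IsDiffExpr D α N w (fun _ _ => 0)
  | pdIter {j : ℕ} (hj : j ≤ N) (I : Fin (j + 1) → Fin 2) (a : Fin m) :
      IsDiffExpr D α N j (fun u x => pdIter u (j + 1) x I a)
  | add {w : ℕ} {f g} (hf : IsDiffExpr D α N w f) (hg : IsDiffExpr D α N w g) :
      IsDiffExpr D α N w (fun u x => f u x + g u x)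
  | mul {w₁ w₂ w : ℕ} {f g} (hf : IsDiffExpr D α N w₁ f) (hg : IsDiffExpr D α N w₂ g)
      (hw : w₁ + w₂ = w) : IsDiffExpr D α N w (fun u x => f u x * g u x)
  | inv {f} (hf : IsDiffExpr D α N 0 f) (h1 : ∀ u, Admissible D α u → ∀ x ∈ D, 1 ≤ f u x) :
      IsDiffExpr D α N 0 (fun u x => (f u x)⁻¹)
  | congr {w : ℕ} {f g} (hf : IsDiffExpr D α N w f)
      (h : ∀ u, Admissible D α u → ∀ x ∈ D, g u x = f u x) : IsDiffExpr D α N w g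

theorem contDiffOn_pdIter (hD : IsOpen D) {u : (Fin 2 → ℝ) → (Fin m → ℝ)}
    (hu : ContDiffOn ℝ (⊤ : ℕ∞) u D) :
    ∀ (l : ℕ) (I : Fin l → Fin 2), ContDiffOn ℝ (⊤ : ℕ∞) (fun y => pdIter u l y I) D
  | 0, _ => hu
  | l + 1, I => contDiffOn_partialDeriv hD (I 0) (contDiffOn_pdIter hD hu l (Fin.tail I))

theorem differentiableAt_of_contDiffOn {F : Type*} [NormedAddCommGroup F] [NormedSpace ℝ F]
    (hD : IsOpen D) {f : (Fin 2 → ℝ) → F} (hf : ContDiffOn ℝ (⊤ : ℕ∞) f D) {x : Fin 2 → ℝ}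
    (hx : x ∈ D) : DifferentiableAt ℝ f x :=
  (hf.contDiffAt (hD.mem_nhds hx)).differentiableAt (by simp)

theorem pdIter_cons (u : (Fin 2 → ℝ) → (Fin m → ℝ)) {l : ℕ} (i : Fin 2) (I : Fin l → Fin 2)
    (x : Fin 2 → ℝ) :
    pdIter u (l + 1) x (Fin.cons i I) = partialDeriv i (fun y => pdIter u l y I) x := by
  simp only [pdIter, Fin.tail_cons, Fin.cons_zero, partialDeriv]

theorem partialDeriv_pdIter (hD : IsOpen D) {u : (Fin 2 → ℝ) → (Fin m → ℝ)}
    (hu : ContDiffOn ℝ (⊤ : ℕ∞) u D) {l : ℕ} (I : Fin l → Fin 2) (a : Fin m) (i : Fin 2)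
    {x : Fin 2 → ℝ} (hx : x ∈ D) :
    partialDeriv i (fun y => pdIter u l y I a) x = pdIter u (l + 1) x (Fin.cons i I) a := by
  rw [pdIter_cons,
    partialDeriv_apply i (differentiableAt_of_contDiffOn hD (contDiffOn_pdIter hD hu l I) hx)]

namespace IsDiffExpr

variable {N w : ℕ} {f g : ((Fin 2 → ℝ) → (Fin m → ℝ)) → (Fin 2 → ℝ) → ℝ}

theorem contDiffOn (hf : IsDiffExpr D α N w f) (hD : IsOpen D) {u : (Fin 2 → ℝ) → (Fin m → ℝ)}
    (hu : Admissible D α u) : ContDiffOn ℝ (⊤ : ℕ∞) (f u) D := by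
  induction hf with
  | const | zero => exact contDiffOn_const
  | pdIter _ I a => exact contDiffOn_pi.1 (contDiffOn_pdIter hD hu.1 _ I) a
  | add _ _ ihf ihg => exact ihf.add ihg
  | mul _ _ _ ihf ihg => exact ihf.mul ihg
  | inv _ h1 ih => exact ih.inv fun x hx => (zero_lt_one.trans_le (h1 u hu x hx)).ne'
  | congr _ h ih => exact ih.congr (h u hu)

theorem differentiableAt (hf : IsDiffExpr D α N w f) (hD : IsOpen D)
    {u : (Fin 2 → ℝ) → (Fin m → ℝ)} (hu : Admissible D α u) {x : Fin 2 → ℝ} (hx : x ∈ D) :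
    DifferentiableAt ℝ (f u) x :=
  differentiableAt_of_contDiffOn hD (hf.contDiffOn hD hu) hx

theorem mono {N' : ℕ} (hf : IsDiffExpr D α N w f) (hN : N ≤ N') : IsDiffExpr D α N' w f := by
  induction hf with
  | const c => exact .const c
  | zero w => exact .zero w
  | pdIter hj I a => exact .pdIter (hj.trans hN) I a
  | add _ _ ihf ihg => exact ihf.add ihg
  | mul _ _ hw ihf ihg => exact ihf.mul ihg hw
  | inv _ h1 ih => exact ih.inv h1
  | congr _ h ih => exact ih.congr h

theorem sum {ι : Type*} (s : Finset ι) {f : ι → ((Fin 2 → ℝ) → (Fin m → ℝ)) → (Fin 2 → ℝ) → ℝ}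
    (hf : ∀ k ∈ s, IsDiffExpr D α N w (f k)) :
    IsDiffExpr D α N w (fun u x => ∑ k ∈ s, f k u x) := by
  classical
  induction s using Finset.induction_on with
  | empty => simpa only [Finset.sum_empty] using zero w
  | insert a s ha ih =>
    simp_rw [Finset.sum_insert ha]
    exact (hf a (Finset.mem_insert_self a s)).add
      (ih fun k hk => hf k (Finset.mem_insert_of_mem hk))

theorem prod {ι : Type*} (s : Finset ι) {f : ι → ((Fin 2 → ℝ) → (Fin m → ℝ)) → (Fin 2 → ℝ) → ℝ}
    (hf : ∀ k ∈ s, IsDiffExpr D α N 0 (f k)) :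
    IsDiffExpr D α N 0 (fun u x => ∏ k ∈ s, f k u x) := by
  classical
  induction s using Finset.induction_on with
  | empty => simpa only [Finset.prod_empty] using const 1
  | insert a s ha ih =>
    simp_rw [Finset.prod_insert ha]
    exact (hf a (Finset.mem_insert_self a s)).mul
      (ih fun k hk => hf k (Finset.mem_insert_of_mem hk)) (zero_add 0)

theorem neg (hf : IsDiffExpr D α N w f) : IsDiffExpr D α N w (fun u x => -f u x) :=
  ((const (-1)).mul hf (zero_add w)).congr fun u _ x _ => (neg_one_mul (f u x)).symm

theorem sub (hf : IsDiffExpr D α N w f) (hg : IsDiffExpr D α N w g) :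
    IsDiffExpr D α N w (fun u x => f u x - g u x) :=
  (hf.add hg.neg).congr fun u _ x _ => sub_eq_add_neg (f u x) (g u x)

theorem partialDeriv (hf : IsDiffExpr D α N w f) (hD : IsOpen D) (i : Fin 2) :
    IsDiffExpr D α (N + 1) (w + 1) (fun u x => partialDeriv i (f u) x) := by
  induction hf with
  | const | zero => exact (zero _).congr fun u _ x _ => partialDeriv_const i _
  | pdIter hj I a =>
    exact (pdIter (Nat.succ_le_succ hj) (Fin.cons i I) a).congr
      fun u hu x hx => partialDeriv_pdIter hD hu.1 I a i hx
  | add hf hg ihf ihg =>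
    exact (ihf.add ihg).congr fun u hu x hx =>
      partialDeriv_add i (hf.differentiableAt hD hu hx) (hg.differentiableAt hD hu hx)
  | @mul w₁ w₂ w f g hf hg hw ihf ihg =>
    have hfg := ihf.mul (hg.mono N.le_succ) (by omega : w₁ + 1 + w₂ = w + 1)
    have hgf := (hf.mono N.le_succ).mul ihg (by omega : w₁ + (w₂ + 1) = w + 1)
    exact (hfg.add hgf).congr fun u hu x hx =>
      partialDeriv_mul i (hf.differentiableAt hD hu hx) (hg.differentiableAt hD hu hx)
  | @inv f hf h1 ih =>
    have hinv := (hf.inv h1).mono N.le_succ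
    refine ((hinv.mul hinv (zero_add 0)).mul ih (zero_add _)).neg.congr fun u hu x hx => ?_
    exact partialDeriv_inv i (hf.differentiableAt hD hu hx)
      (zero_lt_one.trans_le (h1 u hu x hx)).ne'
  | congr _ h ih => exact ih.congr fun u hu x hx => partialDeriv_congr hD i (h u hu) hx

end IsDiffExpr

end DiffExpr

section Growth

/-- `R + Rʷ` up to a factor two, and a constant for `w = 0`: it dominates every monomial of weight
`w` in derivatives of positive weight whose sizes are at most `R`. -/
def growth (w : ℕ) (R : ℝ) : ℝ := R ^ min 1 w + R ^ w

theorem growth_nonneg (w : ℕ) {R : ℝ} (hR : 0 ≤ R) : 0 ≤ growth w R := by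
  unfold growth; positivity

theorem pow_le_growth {w n : ℕ} {R : ℝ} (hR : 0 ≤ R) (hn : min 1 w ≤ n) (hnw : n ≤ w) :
    R ^ n ≤ growth w R := by
  unfold growth
  rcases le_total R 1 with hR1 | hR1
  · linarith [pow_le_pow_of_le_one hR hR1 hn, pow_nonneg hR w]
  · linarith [pow_le_pow_right₀ hR1 hnw, pow_nonneg hR (min 1 w)]

theorem growth_mul_growth_le (w w' : ℕ) {R : ℝ} (hR : 0 ≤ R) :
    growth w R * growth w' R ≤ 4 * growth (w + w') R := by
  have hpow {n n' : ℕ} (hn : min 1 w ≤ n) (hn' : min 1 w' ≤ n') (hnw : n ≤ w) (hnw' : n' ≤ w') :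
      R ^ n * R ^ n' ≤ growth (w + w') R := by
    rw [← pow_add]
    exact pow_le_growth hR (by omega) (by omega)
  calc growth w R * growth w' R
      = R ^ min 1 w * R ^ min 1 w' + R ^ min 1 w * R ^ w' + R ^ w * R ^ min 1 w'
        + R ^ w * R ^ w' := by unfold growth; ring
    _ ≤ 4 * growth (w + w') R := by
        have h₁ := hpow le_rfl le_rfl (by omega) (by omega)
        have h₂ := hpow (n' := w') le_rfl (by omega) (by omega) le_rfl
        have h₃ := hpow (n := w) (by omega) le_rfl le_rfl (by omega)
        have h₄ := hpow (n := w) (n' := w') (by omega) (by omega) le_rfl le_rfl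
        linarith

variable {m : ℕ} {D : Set (Fin 2 → ℝ)} {α : ℝ}

/-- The total size at `x` of the derivatives of `Du` of orders `1, …, N`. -/
def jetSize (N : ℕ) (u : (Fin 2 → ℝ) → (Fin m → ℝ)) (x : Fin 2 → ℝ) : ℝ :=
  ∑ j ∈ Finset.Icc 1 N, ‖pdIter u (j + 1) x‖

theorem jetSize_nonneg (N : ℕ) (u : (Fin 2 → ℝ) → (Fin m → ℝ)) (x : Fin 2 → ℝ) :
    0 ≤ jetSize N u x :=
  Finset.sum_nonneg fun _ _ => norm_nonneg _

theorem norm_apply_apply_le {ι κ : Type*} [Fintype ι] [Fintype κ] (f : ι → κ → ℝ) (i : ι) (k : κ) :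
    ‖f i k‖ ≤ ‖f‖ :=
  (norm_le_pi_norm (f i) k).trans (norm_le_pi_norm f i)

theorem Admissible.abs_pdIter_one_le {u : (Fin 2 → ℝ) → (Fin m → ℝ)} (hu : Admissible D α u)
    {x : Fin 2 → ℝ} (hx : x ∈ D) (I : Fin 1 → Fin 2) (a : Fin m) : |pdIter u 1 x I a| ≤ |α| := by
  refine sq_le_sq.1 (le_trans ?_ (hu.2 x hx))
  calc pdIter u 1 x I a ^ 2 ≤ ∑ b, fderiv ℝ u x (Pi.single (I 0) 1) b ^ 2 :=
        Finset.single_le_sum (f := fun b => fderiv ℝ u x (Pi.single (I 0) 1) b ^ 2)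
          (fun _ _ => sq_nonneg _) (Finset.mem_univ a)
    _ ≤ _ := Finset.single_le_sum (f := fun i => ∑ b, fderiv ℝ u x (Pi.single i 1) b ^ 2)
          (fun _ _ => Finset.sum_nonneg fun _ _ => sq_nonneg _) (Finset.mem_univ (I 0))

theorem isBigO_jetFilter_growth_mul (N w w' : ℕ) :
    (fun p => growth w (jetSize N p.1 p.2) * growth w' (jetSize N p.1 p.2))
      =O[jetFilter m D α] fun p => growth (w + w') (jetSize N p.1 p.2) :=
  IsBigO.of_bound 4 <| Eventually.of_forall fun p => by
    have hR := jetSize_nonneg N p.1 p.2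
    rw [Real.norm_of_nonneg (mul_nonneg (growth_nonneg w hR) (growth_nonneg w' hR)),
      Real.norm_of_nonneg (growth_nonneg _ hR)]
    exact growth_mul_growth_le w w' hR

theorem isBigO_jetFilter_pdIter {N j : ℕ} (hj : j ≤ N) (I : Fin (j + 1) → Fin 2) (a : Fin m) :
    (fun p => pdIter p.1 (j + 1) p.2 I a)
      =O[jetFilter m D α] fun p => growth j (jetSize N p.1 p.2) := by
  rcases Nat.eq_zero_or_pos j with rfl | hj0
  · refine isBigO_principal.2 ⟨|α|, fun p hp => ?_⟩
    have hle := hp.1.abs_pdIter_one_le hp.2 I a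
    norm_num [growth]
    linarith [abs_nonneg α]
  · refine isBigO_principal.2 ⟨1, fun p _ => ?_⟩
    have hR := jetSize_nonneg N p.1 p.2
    rw [Real.norm_of_nonneg (growth_nonneg j hR), one_mul]
    calc ‖pdIter p.1 (j + 1) p.2 I a‖ ≤ ‖pdIter p.1 (j + 1) p.2‖ := norm_apply_apply_le _ I a
      _ ≤ jetSize N p.1 p.2 := Finset.single_le_sum (f := fun j => ‖pdIter p.1 (j + 1) p.2‖)
          (fun _ _ => norm_nonneg _) (Finset.mem_Icc.2 ⟨hj0, hj⟩)
      _ = jetSize N p.1 p.2 ^ 1 := (pow_one _).symm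
      _ ≤ growth j (jetSize N p.1 p.2) := pow_le_growth hR (by omega) hj0

theorem IsDiffExpr.isBigO {N w : ℕ} {f : ((Fin 2 → ℝ) → (Fin m → ℝ)) → (Fin 2 → ℝ) → ℝ}
    (hf : IsDiffExpr D α N w f) :
    (fun p => f p.1 p.2) =O[jetFilter m D α] fun p => growth w (jetSize N p.1 p.2) := by
  have hone : (fun _ => (1 : ℝ)) =O[jetFilter m D α] fun p => growth 0 (jetSize N p.1 p.2) :=
    IsBigO.of_bound 1 <| Eventually.of_forall fun p => by norm_num [growth]
  induction hf with
  | const c => exact (isBigO_const_const c one_ne_zero _).trans hone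
  | zero w => exact isBigO_zero _ _
  | pdIter hj I a => exact isBigO_jetFilter_pdIter hj I a
  | add _ _ ihf ihg => exact ihf.add ihg
  | mul _ _ hw ihf ihg => exact hw ▸ (ihf.mul ihg).trans (isBigO_jetFilter_growth_mul N _ _)
  | inv _ h1 _ =>
    refine IsBigO.trans (isBigO_principal.2 ⟨1, fun p hp => ?_⟩) hone
    rw [norm_inv, norm_one, mul_one]
    exact inv_le_one_of_one_le₀ ((h1 p.1 hp.1 p.2 hp.2).trans (le_abs_self _))
  | congr _ h ih =>
    exact ih.congr' (eventually_principal.2 fun p hp => (h p.1 hp.1 p.2 hp.2).symm) .rfl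

end Growth

section SlotwiseMap

open Matrix

variable {κ ι ρ σ : Type*} [Fintype ι] {n : ℕ}

/-- The action of matrices `B₁, …, Bₙ` on the slots of an `n`-tensor with values in `σ → ℝ`:
`(B · T)_K = ∑_I (B₁)_{K₁I₁} ⋯ (Bₙ)_{KₙIₙ} T_I`. -/
def slotwiseMap (B : Fin n → Matrix κ ι ℝ) (T : (Fin n → ι) → σ → ℝ) : (Fin n → κ) → σ → ℝ :=
  fun K => ∑ I, (∏ s, B s (K s) (I s)) • T I

theorem slotwiseMap_apply (B : Fin n → Matrix κ ι ℝ) (T : (Fin n → ι) → σ → ℝ) (K : Fin n → κ)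
    (A : σ) : slotwiseMap B T K A = ∑ I, (∏ s, B s (K s) (I s)) * T I A := by
  simp only [slotwiseMap, Finset.sum_apply, Pi.smul_apply, smul_eq_mul]

theorem slotwiseMap_add (B : Fin n → Matrix κ ι ℝ) (S T : (Fin n → ι) → σ → ℝ) :
    slotwiseMap B (S + T) = slotwiseMap B S + slotwiseMap B T := by
  ext K A
  simp only [slotwiseMap_apply, Pi.add_apply, mul_add, Finset.sum_add_distrib]

theorem slotwiseMap_sum {τ : Type*} (s : Finset τ) (B : Fin n → Matrix κ ι ℝ)
    (T : τ → (Fin n → ι) → σ → ℝ) :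
    slotwiseMap B (∑ t ∈ s, T t) = ∑ t ∈ s, slotwiseMap B (T t) := by
  ext K A
  simp only [slotwiseMap_apply, Finset.sum_apply, Finset.mul_sum]
  exact Finset.sum_comm

theorem slotwiseMap_slotwiseMap [Fintype κ] (C : Fin n → Matrix ρ κ ℝ) (B : Fin n → Matrix κ ι ℝ)
    (T : (Fin n → ι) → σ → ℝ) :
    slotwiseMap C (slotwiseMap B T) = slotwiseMap (fun s => C s * B s) T := by
  ext R A
  simp only [slotwiseMap_apply, mul_apply, Finset.prod_univ_sum, Fintype.piFinset_univ,
    Finset.prod_mul_distrib, Finset.sum_mul, Finset.mul_sum, mul_assoc]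
  exact Finset.sum_comm

theorem slotwiseMap_one [DecidableEq ι] (T : (Fin n → ι) → σ → ℝ) :
    slotwiseMap (fun _ => (1 : Matrix ι ι ℝ)) T = T := by
  ext I A
  have hprod (J : Fin n → ι) : ∏ s, (1 : Matrix ι ι ℝ) (I s) (J s) = if I = J then 1 else 0 := by
    simp [one_apply, Finset.prod_ite_zero, funext_iff]
  simp only [slotwiseMap_apply, hprod, ite_mul, one_mul, zero_mul, Finset.sum_ite_eq,
    Finset.mem_univ, if_true]

theorem slotwiseMap_update_one [DecidableEq ι] (a : Fin n) (M : Matrix ι ι ℝ)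
    (T : (Fin n → ι) → σ → ℝ) (I : Fin n → ι) :
    slotwiseMap (Function.update (fun _ => 1) a M) T I
      = ∑ k, M (I a) k • T (Function.update I a k) := by
  have hprod (J : Fin n → ι) :
      ∏ s, (Function.update (fun _ => (1 : Matrix ι ι ℝ)) a M) s (I s) (J s)
      = M (I a) (J a) * if ∀ s ≠ a, I s = J s then 1 else 0 := by
    rw [← Finset.mul_prod_erase _ _ (Finset.mem_univ a), Function.update_self]
    congr 1
    rw [Finset.prod_congr rfl fun s hs => by
      rw [Function.update_of_ne (Finset.ne_of_mem_erase hs), one_apply]]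
    simp [Finset.prod_ite_zero]
  refine (Finset.sum_of_injOn (Function.update I a)
    (Function.update_injective I a).injOn (by simp) (fun J _ hJ => ?_) fun k _ => ?_).symm
  · rw [hprod, if_neg, mul_zero, zero_smul]
    intro hIJ
    refine hJ ⟨J a, Finset.mem_coe.2 (Finset.mem_univ _), ?_⟩
    exact Function.update_eq_iff.2 ⟨rfl, hIJ⟩
  · rw [hprod, if_pos fun s hs => (Function.update_of_ne hs k I).symm, mul_one,
      Function.update_self]

theorem sum_dotProduct_slotwiseMap_transpose [Fintype κ] [Fintype σ] (B : Fin n → Matrix κ ι ℝ)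
    (T : (Fin n → ι) → σ → ℝ) (S : (Fin n → κ) → σ → ℝ) :
    ∑ I, T I ⬝ᵥ slotwiseMap (fun s => (B s)ᵀ) S I = ∑ K, slotwiseMap B T K ⬝ᵥ S K := by
  simp only [slotwiseMap, dotProduct_sum, sum_dotProduct, dotProduct_smul, smul_dotProduct,
    transpose_apply]
  exact Finset.sum_comm

end SlotwiseMap

section Immersion

open Matrix

variable {m : ℕ} (F : (Fin 2 → ℝ) → (Fin 2 ⊕ Fin m → ℝ)) (x : Fin 2 → ℝ)

/-- The Jacobian matrix of `F`, with columns `∂ᵢF`. -/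
def jacobian : Matrix (Fin 2 ⊕ Fin m) (Fin 2) ℝ := Matrix.of fun A i => pd F i x A

theorem gmet_eq_transpose_mul : gmet F x = (jacobian F x)ᵀ * jacobian F x := rfl

theorem transpose_gmet : (gmet F x)ᵀ = gmet F x := by
  rw [gmet_eq_transpose_mul, transpose_mul, transpose_transpose]

theorem transpose_gmet_inv : ((gmet F x)⁻¹)ᵀ = (gmet F x)⁻¹ := by
  rw [transpose_nonsing_inv, transpose_gmet]

/-- The matrix `1 - J g⁻¹ Jᵀ` of the orthogonal projection onto the normal space. -/
def normalMatrix : Matrix (Fin 2 ⊕ Fin m) (Fin 2 ⊕ Fin m) ℝ :=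
  1 - jacobian F x * ((gmet F x)⁻¹ * (jacobian F x)ᵀ)

theorem nproj_eq_sub_mulVec (v : Fin 2 ⊕ Fin m → ℝ) :
    nproj F x v = v - jacobian F x *ᵥ ((gmet F x)⁻¹ *ᵥ ((jacobian F x)ᵀ *ᵥ v)) := by
  ext A
  simp only [nproj, Pi.sub_apply, Finset.sum_apply, Pi.smul_apply, smul_eq_mul, mulVec,
    dotProduct, Finset.mul_sum]
  congr! 3 with k _ l
  simp only [dotA, jacobian, of_apply, transpose_apply, Finset.mul_sum, Finset.sum_mul]
  exact Finset.sum_congr rfl fun B _ => by ring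

theorem nproj_eq_mulVec (v : Fin 2 ⊕ Fin m → ℝ) : nproj F x v = normalMatrix F x *ᵥ v := by
  rw [nproj_eq_sub_mulVec, normalMatrix, sub_mulVec, one_mulVec, ← mulVec_mulVec, ← mulVec_mulVec]

variable {F x}

theorem nproj_eq_self {v : Fin 2 ⊕ Fin m → ℝ} (hv : (jacobian F x)ᵀ *ᵥ v = 0) :
    nproj F x v = v := by
  rw [nproj_eq_sub_mulVec, hv, mulVec_zero, mulVec_zero, sub_zero]

theorem dotProduct_nproj {v : Fin 2 ⊕ Fin m → ℝ} (hv : (jacobian F x)ᵀ *ᵥ v = 0)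
    (w : Fin 2 ⊕ Fin m → ℝ) : v ⬝ᵥ nproj F x w = v ⬝ᵥ w := by
  rw [nproj_eq_sub_mulVec, dotProduct_sub, dotProduct_mulVec, ← mulVec_transpose, hv,
    zero_dotProduct, sub_zero]

theorem transpose_jacobian_mulVec_nproj (hdet : IsUnit (gmet F x).det) (v : Fin 2 ⊕ Fin m → ℝ) :
    (jacobian F x)ᵀ *ᵥ nproj F x v = 0 := by
  rw [nproj_eq_sub_mulVec, mulVec_sub, mulVec_mulVec, ← gmet_eq_transpose_mul, mulVec_mulVec,
    mul_nonsing_inv _ hdet, one_mulVec, sub_self]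

theorem transpose_jacobian_mulVec_covIter (hdet : IsUnit (gmet F x).det) :
    ∀ (l : ℕ) (I : Fin (l + 2) → Fin 2), (jacobian F x)ᵀ *ᵥ covIter F l x I = 0
  | 0, _ => transpose_jacobian_mulVec_nproj hdet _
  | l + 1, I => by
    simp only [covIter, covDer, mulVec_sub, transpose_jacobian_mulVec_nproj hdet, mulVec_sum,
      mulVec_smul, transpose_jacobian_mulVec_covIter hdet l, smul_zero, Finset.sum_const_zero,
      sub_zero]

variable (F x) in
/-- The matrix `J g⁻¹`, whose columns form the basis of the tangent plane dual to `∂₁F, ∂₂F`. -/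
def dualFrame : Matrix (Fin 2 ⊕ Fin m) (Fin 2) ℝ := jacobian F x * (gmet F x)⁻¹

theorem transpose_jacobian_mul_dualFrame (hdet : IsUnit (gmet F x).det) :
    (jacobian F x)ᵀ * dualFrame F x = 1 := by
  rw [dualFrame, ← Matrix.mul_assoc, ← gmet_eq_transpose_mul, mul_nonsing_inv _ hdet]

theorem transpose_dualFrame_mul_self (hdet : IsUnit (gmet F x).det) :
    (dualFrame F x)ᵀ * dualFrame F x = (gmet F x)⁻¹ := by
  rw [dualFrame, transpose_mul, Matrix.mul_assoc, ← dualFrame,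
    transpose_jacobian_mul_dualFrame hdet, Matrix.mul_one, transpose_gmet_inv]

variable (F x) in
/-- The tensor `∇ˡA` with its slots extended to the ambient space, vanishing on normal vectors. -/
def ambientCov (l : ℕ) : (Fin (l + 2) → Fin 2 ⊕ Fin m) → (Fin 2 ⊕ Fin m → ℝ) :=
  slotwiseMap (fun _ => dualFrame F x) (covIter F l x)

theorem covIter_eq_slotwiseMap_ambientCov (hdet : IsUnit (gmet F x).det) (l : ℕ) :
    covIter F l x = slotwiseMap (fun _ => (jacobian F x)ᵀ) (ambientCov F x l) := by
  rw [ambientCov, slotwiseMap_slotwiseMap, transpose_jacobian_mul_dualFrame hdet, slotwiseMap_one]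

theorem nCov2_eq_sum_sq (hdet : IsUnit (gmet F x).det) (l : ℕ) :
    nCov2 F l x = ∑ K, ∑ A, ambientCov F x l K A ^ 2 := by
  calc nCov2 F l x
      = ∑ I, covIter F l x I ⬝ᵥ slotwiseMap (fun _ => (gmet F x)⁻¹) (covIter F l x) I := by
        simp only [slotwiseMap, dotProduct_sum, dotProduct_smul, smul_eq_mul]; rfl
    _ = ∑ K, ambientCov F x l K ⬝ᵥ ambientCov F x l K := by
        rw [← transpose_dualFrame_mul_self hdet, ← slotwiseMap_slotwiseMap,
          sum_dotProduct_slotwiseMap_transpose, ambientCov]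
    _ = _ := by simp only [dotProduct, sq]

theorem nCov2_nonneg (hdet : IsUnit (gmet F x).det) (l : ℕ) : 0 ≤ nCov2 F l x := by
  rw [nCov2_eq_sum_sq hdet]
  exact Finset.sum_nonneg fun _ _ => Finset.sum_nonneg fun _ _ => sq_nonneg _

end Immersion

section Graph

open Matrix

variable {m : ℕ} {D : Set (Fin 2 → ℝ)} {α : ℝ} {u : (Fin 2 → ℝ) → (Fin m → ℝ)} {x : Fin 2 → ℝ}

theorem contDiffOn_gr (hu : ContDiffOn ℝ (⊤ : ℕ∞) u D) : ContDiffOn ℝ (⊤ : ℕ∞) (gr u) D := by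
  rw [contDiffOn_pi]
  rintro (j | a)
  · exact contDiffOn_pi.1 contDiffOn_id j
  · exact contDiffOn_pi.1 hu a

variable (u x) in
/-- The Jacobian matrix of `u`. -/
def gradMatrix : Matrix (Fin m) (Fin 2) ℝ := Matrix.of fun a i => pdIter u 1 x (fun _ => i) a

theorem jacobian_gr (hD : IsOpen D) (hu : ContDiffOn ℝ (⊤ : ℕ∞) u D) (hx : x ∈ D) :
    jacobian (gr u) x = fromRows 1 (gradMatrix u x) := by
  have hgr := differentiableAt_of_contDiffOn hD (contDiffOn_gr hu) hx
  ext (k | a) i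
  · calc pd (gr u) i x (Sum.inl k) = partialDeriv i (fun y : Fin 2 → ℝ => y k) x :=
          partialDeriv_apply i hgr _
      _ = partialDeriv i (fun y : Fin 2 → ℝ => y) x k :=
          (partialDeriv_apply i differentiableAt_id k).symm
      _ = _ := by simp [partialDeriv, one_apply, Pi.single_apply]
  · calc pd (gr u) i x (Sum.inr a) = partialDeriv i (fun y => u y a) x := partialDeriv_apply i hgr _
      _ = partialDeriv i u x a :=
          (partialDeriv_apply i (differentiableAt_of_contDiffOn hD hu hx) a).symm

theorem one_le_det_gmet_gr (hD : IsOpen D) (hu : ContDiffOn ℝ (⊤ : ℕ∞) u D) (hx : x ∈ D) :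
    1 ≤ (gmet (gr u) x).det := by
  set S := (gradMatrix u x)ᵀ * gradMatrix u x
  have hS : S.PosSemidef := by
    simpa only [conjTranspose_eq_transpose_of_trivial] using
      posSemidef_conjTranspose_mul_self (gradMatrix u x)
  have hg : gmet (gr u) x = 1 + S := by
    rw [gmet_eq_transpose_mul, jacobian_gr hD hu hx, transpose_fromRows, fromCols_mul_fromRows,
      transpose_one, Matrix.mul_one]
  have hdet : (1 + S).det = 1 + S.trace + S.det := by
    simp [det_fin_two, trace_fin_two]
    ring
  rw [hg, hdet]
  linarith [hS.trace_nonneg, hS.det_nonneg]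

theorem isUnit_det_gmet_gr (hD : IsOpen D) (hu : ContDiffOn ℝ (⊤ : ℕ∞) u D) (hx : x ∈ D) :
    IsUnit (gmet (gr u) x).det :=
  (zero_lt_one.trans_le (one_le_det_gmet_gr hD hu hx)).ne'.isUnit

/-- The vector `(0, v)` of the ambient space. -/
def vertical (v : Fin m → ℝ) : Fin 2 ⊕ Fin m → ℝ := Sum.elim 0 v

theorem apply_eq_nproj_sub_sum_gradMatrix (hD : IsOpen D) (hu : ContDiffOn ℝ (⊤ : ℕ∞) u D)
    (hx : x ∈ D) (v : Fin m → ℝ) (a : Fin m) :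
    v a = nproj (gr u) x (vertical v) (Sum.inr a)
      - ∑ k, gradMatrix u x a k * nproj (gr u) x (vertical v) (Sum.inl k) := by
  obtain ⟨c, hc⟩ : ∃ c, nproj (gr u) x (vertical v) = vertical v - jacobian (gr u) x *ᵥ c :=
    ⟨_, nproj_eq_sub_mulVec _ _ _⟩
  rw [hc, jacobian_gr hD hu hx, fromRows_mulVec, one_mulVec]
  simp only [vertical, Pi.sub_apply, Sum.elim_inr, Sum.elim_inl, Pi.zero_apply, zero_sub,
    mulVec, dotProduct, mul_neg, Finset.sum_neg_distrib]
  ring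

end Graph

section GraphDiffExpr

open Matrix

variable {m : ℕ} {D : Set (Fin 2 → ℝ)} {α : ℝ} {N w : ℕ}

theorem IsDiffExpr.matrix_mul {ι κ ρ : Type*} [Fintype κ] {w₁ w₂ : ℕ}
    {M : ((Fin 2 → ℝ) → (Fin m → ℝ)) → (Fin 2 → ℝ) → Matrix ι κ ℝ}
    {K : ((Fin 2 → ℝ) → (Fin m → ℝ)) → (Fin 2 → ℝ) → Matrix κ ρ ℝ}
    (hM : ∀ i k, IsDiffExpr D α N w₁ (fun u x => M u x i k))
    (hK : ∀ k j, IsDiffExpr D α N w₂ (fun u x => K u x k j)) (hw : w₁ + w₂ = w) (i : ι) (j : ρ) :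
    IsDiffExpr D α N w (fun u x => (M u x * K u x) i j) :=
  IsDiffExpr.sum Finset.univ fun k _ => (hM i k).mul (hK k j) hw

theorem isDiffExpr_jacobian (hD : IsOpen D) (A : Fin 2 ⊕ Fin m) (i : Fin 2) :
    IsDiffExpr D α 0 0 (fun u x => jacobian (gr u) x A i) := by
  cases A with
  | inl k =>
    exact (IsDiffExpr.const ((1 : Matrix (Fin 2) (Fin 2) ℝ) k i)).congr
      fun u hu x hx => by rw [jacobian_gr hD hu.1 hx, fromRows_apply_inl]
  | inr a =>
    exact (IsDiffExpr.pdIter le_rfl (fun _ => i) a).congr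
      fun u hu x hx => by rw [jacobian_gr hD hu.1 hx, fromRows_apply_inr, gradMatrix, of_apply]

theorem isDiffExpr_gmet (hD : IsOpen D) (i j : Fin 2) :
    IsDiffExpr (m := m) D α 0 0 (fun u x => gmet (gr u) x i j) :=
  .matrix_mul (fun i A => isDiffExpr_jacobian hD A i) (isDiffExpr_jacobian hD) rfl i j

theorem isDiffExpr_det_gmet (hD : IsOpen D) :
    IsDiffExpr (m := m) D α 0 0 (fun u x => (gmet (gr u) x).det) := by
  simp only [det_fin_two]
  exact ((isDiffExpr_gmet hD 0 0).mul (isDiffExpr_gmet hD 1 1) rfl).sub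
    ((isDiffExpr_gmet hD 0 1).mul (isDiffExpr_gmet hD 1 0) rfl)

theorem isDiffExpr_adjugate_gmet (hD : IsOpen D) (i j : Fin 2) :
    IsDiffExpr (m := m) D α 0 0 (fun u x => (gmet (gr u) x).adjugate i j) := by
  simp only [adjugate_fin_two]
  fin_cases i <;> fin_cases j
  · exact isDiffExpr_gmet hD 1 1
  · exact (isDiffExpr_gmet hD 0 1).neg
  · exact (isDiffExpr_gmet hD 1 0).neg
  · exact isDiffExpr_gmet hD 0 0

theorem isDiffExpr_gmet_inv (hD : IsOpen D) (i j : Fin 2) :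
    IsDiffExpr (m := m) D α 0 0 (fun u x => (gmet (gr u) x)⁻¹ i j) := by
  simp only [inv_def, Ring.inverse_eq_inv', Matrix.smul_apply, smul_eq_mul]
  exact ((isDiffExpr_det_gmet hD).inv fun u hu x hx => one_le_det_gmet_gr hD hu.1 hx).mul
    (isDiffExpr_adjugate_gmet hD i j) rfl

theorem isDiffExpr_dualFrame (hD : IsOpen D) (A : Fin 2 ⊕ Fin m) (i : Fin 2) :
    IsDiffExpr D α 0 0 (fun u x => dualFrame (gr u) x A i) :=
  .matrix_mul (isDiffExpr_jacobian hD) (isDiffExpr_gmet_inv hD) rfl A i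

theorem isDiffExpr_normalMatrix (hD : IsOpen D) (A B : Fin 2 ⊕ Fin m) :
    IsDiffExpr D α 0 0 (fun u x => normalMatrix (gr u) x A B) :=
  (IsDiffExpr.const ((1 : Matrix (Fin 2 ⊕ Fin m) (Fin 2 ⊕ Fin m) ℝ) A B)).sub <|
    .matrix_mul (isDiffExpr_jacobian hD) (.matrix_mul (isDiffExpr_gmet_inv hD)
      (fun k A => isDiffExpr_jacobian hD A k) rfl) rfl A B

end GraphDiffExpr

section LeadingTerm

open Matrix

variable {m : ℕ} {D : Set (Fin 2 → ℝ)} {α : ℝ} {N w : ℕ} {u : (Fin 2 → ℝ) → (Fin m → ℝ)}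
  {x : Fin 2 → ℝ}

theorem pd_comm {F : (Fin 2 → ℝ) → (Fin 2 ⊕ Fin m → ℝ)} (hD : IsOpen D)
    (hF : ContDiffOn ℝ (⊤ : ℕ∞) F D) (hx : x ∈ D) (i j : Fin 2) :
    pd (pd F i) j x = pd (pd F j) i x := by
  have hsymm : IsSymmSndFDerivAt ℝ F x :=
    (hF.contDiffAt (hD.mem_nhds hx)).isSymmSndFDerivAt (by
      rw [minSmoothness_of_isRCLikeNormedField]
      exact WithTop.coe_le_coe.2 le_top)
  have hdiff : DifferentiableAt ℝ (fderiv ℝ F) x :=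
    differentiableAt_of_contDiffOn hD (hF.fderiv_of_isOpen hD (by simp)) hx
  have hpd (i j : Fin 2) :
      pd (pd F i) j x = fderiv ℝ (fderiv ℝ F) x (Pi.single j 1) (Pi.single i 1) := by
    change fderiv ℝ (fun y => fderiv ℝ F y (Pi.single i 1)) x (Pi.single j 1) = _
    rw [fderiv_clm_apply hdiff (differentiableAt_const _)]
    simp
  rw [hpd, hpd, hsymm.eq]

theorem pd_vertical_pdIter (hD : IsOpen D) (hu : ContDiffOn ℝ (⊤ : ℕ∞) u D) (hx : x ∈ D) {l : ℕ}
    (i : Fin 2) (I : Fin l → Fin 2) :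
    pd (fun y => vertical (pdIter u l y I)) i x = vertical (pdIter u (l + 1) x (Fin.cons i I)) := by
  have hsmooth : ContDiffOn ℝ (⊤ : ℕ∞) (fun y => vertical (pdIter u l y I)) D := by
    rw [contDiffOn_pi]
    rintro (_ | a)
    · exact contDiffOn_const
    · exact contDiffOn_pi.1 (contDiffOn_pdIter hD hu l I) a
  ext A
  rw [pd_eq_partialDeriv, partialDeriv_apply i (differentiableAt_of_contDiffOn hD hsmooth hx)]
  rcases A with _ | a
  · exact partialDeriv_const i 0
  · exact partialDeriv_pdIter hD hu I a i hx

theorem pd_pd_gr (hD : IsOpen D) (hu : ContDiffOn ℝ (⊤ : ℕ∞) u D) (hx : x ∈ D) (I : Fin 2 → Fin 2) :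
    pd (pd (gr u) (I 0)) (I 1) x = vertical (pdIter u 2 x I) := by
  have hgr : EqOn (pd (gr u) (I 1)) (fun y => Sum.elim (Pi.single (I 1) 1) 0
      + vertical (pdIter u 1 y (Fin.tail I))) D := fun y hy => by
    ext A
    change jacobian (gr u) y A (I 1) = _
    rw [jacobian_gr hD hu hy]
    cases A <;> simp [vertical, Matrix.one_apply, Pi.single_apply, gradMatrix, pdIter, Fin.tail]
  rw [pd_comm hD (contDiffOn_gr hu) hx, pd_eq_partialDeriv, partialDeriv_congr hD _ hgr hx]
  conv_rhs => rw [← Fin.cons_self_tail I, ← pd_vertical_pdIter hD hu hx]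
  simp only [partialDeriv, pd, fderiv_const_add]

/-- Vector-valued differential expressions: every coordinate is one. -/
def IsDiffField (D : Set (Fin 2 → ℝ)) (α : ℝ) (N w : ℕ)
    (V : ((Fin 2 → ℝ) → (Fin m → ℝ)) → (Fin 2 → ℝ) → (Fin 2 ⊕ Fin m → ℝ)) : Prop :=
  ∀ A, IsDiffExpr D α N w (fun u x => V u x A)

namespace IsDiffField

variable {V W : ((Fin 2 → ℝ) → (Fin m → ℝ)) → (Fin 2 → ℝ) → (Fin 2 ⊕ Fin m → ℝ)}

theorem add (hV : IsDiffField D α N w V) (hW : IsDiffField D α N w W) :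
    IsDiffField D α N w (fun u x => V u x + W u x) := fun A => (hV A).add (hW A)

theorem sub (hV : IsDiffField D α N w V) (hW : IsDiffField D α N w W) :
    IsDiffField D α N w (fun u x => V u x - W u x) := fun A => (hV A).sub (hW A)

theorem congr (hV : IsDiffField D α N w V) (h : ∀ u, Admissible D α u → ∀ x ∈ D, W u x = V u x) :
    IsDiffField D α N w W := fun A => (hV A).congr fun u hu x hx => congrFun (h u hu x hx) A

theorem mono {N' : ℕ} (hV : IsDiffField D α N w V) (hN : N ≤ N') : IsDiffField D α N' w V :=
  fun A => (hV A).mono hN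

theorem differentiableAt (hV : IsDiffField D α N w V) (hD : IsOpen D) (hu : Admissible D α u)
    (hx : x ∈ D) : DifferentiableAt ℝ (V u) x :=
  differentiableAt_pi.2 fun A => (hV A).differentiableAt hD hu hx

theorem dotProduct {w' w'' : ℕ} (hV : IsDiffField D α N w V) (hW : IsDiffField D α N w' W)
    (hw : w + w' = w'') : IsDiffExpr D α N w'' (fun u x => dotA (V u x) (W u x)) :=
  .sum _ fun A _ => (hV A).mul (hW A) hw

theorem mulVec {w' w'' : ℕ} {M : ((Fin 2 → ℝ) → (Fin m → ℝ)) → (Fin 2 → ℝ) →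
    Matrix (Fin 2 ⊕ Fin m) (Fin 2 ⊕ Fin m) ℝ}
    (hM : ∀ A B, IsDiffExpr D α N w (fun u x => M u x A B)) (hV : IsDiffField D α N w' V)
    (hw : w + w' = w'') : IsDiffField D α N w'' (fun u x => M u x *ᵥ V u x) := fun A =>
  .sum Finset.univ fun B _ => (hM A B).mul (hV B) hw

theorem nproj (hD : IsOpen D) (hV : IsDiffField D α N w V) :
    IsDiffField D α N w (fun u x => nproj (gr u) x (V u x)) := by
  simp only [nproj_eq_mulVec]
  exact mulVec (fun A B => (isDiffExpr_normalMatrix hD A B).mono N.zero_le) hV (zero_add w)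

theorem pd (hD : IsOpen D) (hV : IsDiffField D α N w V) (i : Fin 2) :
    IsDiffField D α (N + 1) (w + 1) (fun u x => pd (V u) i x) := fun A =>
  ((hV A).partialDeriv hD i).congr fun _ hu _ hx =>
    partialDeriv_apply i (hV.differentiableAt hD hu hx) A

end IsDiffField

theorem isDiffField_pd_nproj_sub_nproj_pd {V : ((Fin 2 → ℝ) → (Fin m → ℝ)) → (Fin 2 → ℝ) →
    (Fin 2 ⊕ Fin m → ℝ)} (hD : IsOpen D) (hV : IsDiffField D α N w V) (hN : 1 ≤ N)
    (i : Fin 2) : IsDiffField D α N (w + 1) (fun u x =>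
      pd (fun y => nproj (gr u) y (V u y)) i x
        - nproj (gr u) x (pd (V u) i x)) := by
  have hP (A B : Fin 2 ⊕ Fin m) :
      IsDiffExpr D α N 1 (fun u x => partialDeriv i (fun y => normalMatrix (gr u) y A B) x) :=
    ((isDiffExpr_normalMatrix hD A B).partialDeriv hD i).mono hN
  refine (IsDiffField.mulVec hP hV (add_comm 1 w)).congr fun u hu x hx => ?_
  ext A
  have hdP (B : Fin 2 ⊕ Fin m) := (isDiffExpr_normalMatrix hD A B).differentiableAt hD hu hx
  have hdV (B : Fin 2 ⊕ Fin m) := (hV B).differentiableAt hD hu hx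
  rw [Pi.sub_apply, pd_eq_partialDeriv,
    partialDeriv_apply i ((hV.nproj hD).differentiableAt hD hu hx)]
  simp only [nproj_eq_mulVec, Matrix.mulVec, dotProduct]
  rw [partialDeriv_sum _ _ fun B _ => (hdP B).fun_mul (hdV B), ← Finset.sum_sub_distrib]
  refine Finset.sum_congr rfl fun B _ => ?_
  rw [partialDeriv_mul i (hdP B) (hdV B), pd_eq_partialDeriv,
    partialDeriv_apply i (hV.differentiableAt hD hu hx)]
  ring

theorem isDiffField_vertical (l : ℕ) (I : Fin (l + 1) → Fin 2) :
    IsDiffField (m := m) D α l l (fun u x => vertical (pdIter u (l + 1) x I))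
  | Sum.inl _ => .zero l
  | Sum.inr a => .pdIter le_rfl I a

theorem isDiffField_pd_gr (hD : IsOpen D) (i : Fin 2) :
    IsDiffField (m := m) D α 0 0 (fun u x => pd (gr u) i x) := fun A => isDiffExpr_jacobian hD A i

theorem isDiffExpr_chr (hD : IsOpen D) (i j k : Fin 2) :
    IsDiffExpr (m := m) D α 1 1 (fun u x => chr (gr u) i j k x) :=
  .sum _ fun l _ => ((isDiffExpr_gmet_inv hD k l).mono zero_le_one).mul
    (((isDiffField_pd_gr hD i).pd hD j).dotProduct
      ((isDiffField_pd_gr hD l).mono zero_le_one) rfl) rfl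

theorem pd_covIter_eq (hD : IsOpen D) {l : ℕ}
    (hE : ∀ I, IsDiffField D α l (l + 1) fun (u : (Fin 2 → ℝ) → (Fin m → ℝ)) x =>
      covIter (gr u) l x I - nproj (gr u) x (vertical (pdIter u (l + 2) x I)))
    (hu : Admissible D α u) (hx : x ∈ D) (i : Fin 2) (I : Fin (l + 2) → Fin 2) :
    pd (fun y => covIter (gr u) l y I) i x =
      pd (fun y => covIter (gr u) l y I - nproj (gr u) y (vertical (pdIter u (l + 2) y I))) i x
        + pd (fun y => nproj (gr u) y (vertical (pdIter u (l + 2) y I))) i x := by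
  simp only [pd_eq_partialDeriv]
  rw [← partialDeriv_add i ((hE I).differentiableAt hD hu hx)
    (((isDiffField_vertical (l + 1) I).nproj hD).differentiableAt hD hu hx)]
  simp only [sub_add_cancel]

theorem isDiffField_covIter_sub_nproj (hD : IsOpen D) (l : ℕ) : ∀ I, IsDiffField D α l (l + 1)
    fun (u : (Fin 2 → ℝ) → (Fin m → ℝ)) x =>
      covIter (gr u) l x I - nproj (gr u) x (vertical (pdIter u (l + 2) x I)) := by
  induction l with
  | zero =>
    intro I A
    refine (IsDiffExpr.zero _).congr fun u hu x hx => ?_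
    simp only [covIter, sffT, pd_pd_gr hD hu.1 hx, Nat.reduceAdd, sub_self, Pi.zero_apply]
  | succ l ih =>
    intro I
    set i := I 0
    set J := Fin.tail I with hJ
    have hlead (J : Fin (l + 2) → Fin 2) :=
      isDiffField_vertical (m := m) (D := D) (α := α) (l + 1) J
    have hcov (J : Fin (l + 2) → Fin 2) :
        IsDiffField (m := m) D α (l + 1) (l + 1) fun u x => covIter (gr u) l x J :=
      (((ih J).mono l.le_succ).add ((hlead J).nproj hD)).congr
        fun u _ x _ => (sub_add_cancel _ _).symm
    have hderiv := (((ih J).pd hD i).add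
      (isDiffField_pd_nproj_sub_nproj_pd hD (hlead J) (by omega) i)).nproj hD
    have hchr : IsDiffField (m := m) D α (l + 1) (l + 2) fun u x => ∑ a, ∑ k,
        chr (gr u) i (J a) k x • covIter (gr u) l x (Function.update J a k) := fun A => by
      simp only [Finset.sum_apply, Pi.smul_apply, smul_eq_mul]
      exact .sum _ fun a _ => .sum _ fun k _ =>
        ((isDiffExpr_chr hD _ _ _).mono (by omega)).mul (hcov _ A) (by omega)
    refine (hderiv.sub hchr).congr fun u hu x hx => ?_
    have hproj (v : Fin 2 ⊕ Fin m → ℝ) :=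
      nproj_eq_self (transpose_jacobian_mulVec_nproj (isUnit_det_gmet_gr hD hu.1 hx) v)
    have hv : vertical (pdIter u (l + 1 + 2) x I)
        = pd (fun y => vertical (pdIter u (l + 2) y J)) i x := by
      rw [pd_vertical_pdIter hD hu.1 hx, Fin.cons_self_tail]
    rw [covIter, covDer, ← hJ, hv, pd_covIter_eq hD ih hu hx]
    simp only [nproj_eq_mulVec, mulVec_add, mulVec_sub] at hproj ⊢
    rw [hproj]
    abel

theorem isDiffField_covIter (hD : IsOpen D) (l : ℕ) (I : Fin (l + 2) → Fin 2) :
    IsDiffField (m := m) D α (l + 1) (l + 1) fun u x => covIter (gr u) l x I :=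
  (((isDiffField_covIter_sub_nproj hD l I).mono l.le_succ).add
    ((isDiffField_vertical (l + 1) I).nproj hD)).congr fun _ _ _ _ => (sub_add_cancel _ _).symm

end LeadingTerm

section Comparison

variable {m : ℕ} {D : Set (Fin 2 → ℝ)} {α : ℝ} {N : ℕ}

/-- The pointwise norm `|∇ˡA|_g` on the graph of `u`. -/
def covNorm (l : ℕ) (u : (Fin 2 → ℝ) → (Fin m → ℝ)) (x : Fin 2 → ℝ) : ℝ := √(nCov2 (gr u) l x)

theorem covNorm_nonneg (l : ℕ) (u : (Fin 2 → ℝ) → (Fin m → ℝ)) (x : Fin 2 → ℝ) :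
    0 ≤ covNorm l u x := Real.sqrt_nonneg _

theorem covNorm_sq (hD : IsOpen D) {u : (Fin 2 → ℝ) → (Fin m → ℝ)}
    (hu : ContDiffOn ℝ (⊤ : ℕ∞) u D) {x : Fin 2 → ℝ} (hx : x ∈ D) (l : ℕ) :
    covNorm l u x ^ 2 = nCov2 (gr u) l x :=
  Real.sq_sqrt (nCov2_nonneg (isUnit_det_gmet_gr hD hu hx) l)

theorem IsDiffExpr.isBigO_one {f : ((Fin 2 → ℝ) → (Fin m → ℝ)) → (Fin 2 → ℝ) → ℝ}
    (hf : IsDiffExpr D α N 0 f) : (fun p => f p.1 p.2) =O[jetFilter m D α] fun _ => (1 : ℝ) :=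
  hf.isBigO.trans <| isBigO_of_le' (c := 2) _ fun p => by norm_num [growth]

theorem IsDiffExpr.isBigO_mul {f : ((Fin 2 → ℝ) → (Fin m → ℝ)) → (Fin 2 → ℝ) → ℝ}
    (hf : IsDiffExpr D α N 0 f) {h G : ((Fin 2 → ℝ) → (Fin m → ℝ)) × (Fin 2 → ℝ) → ℝ}
    (hh : h =O[jetFilter m D α] G) : (fun p => f p.1 p.2 * h p) =O[jetFilter m D α] G := by
  simpa only [one_mul] using hf.isBigO_one.mul hh

theorem isBigO_jetFilter_congr {f g G : ((Fin 2 → ℝ) → (Fin m → ℝ)) × (Fin 2 → ℝ) → ℝ}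
    (hf : f =O[jetFilter m D α] G) (h : ∀ u, Admissible D α u → ∀ x ∈ D, g (u, x) = f (u, x)) :
    g =O[jetFilter m D α] G :=
  hf.congr' (eventually_principal.2 fun p hp => (h p.1 hp.1 p.2 hp.2).symm) .rfl

theorem isDiffExpr_ambientCov (hD : IsOpen D) (l : ℕ) (K : Fin (l + 2) → Fin 2 ⊕ Fin m)
    (A : Fin 2 ⊕ Fin m) :
    IsDiffExpr D α (l + 1) (l + 1) (fun u x => ambientCov (gr u) x l K A) := by
  simp only [ambientCov, slotwiseMap_apply]
  exact .sum _ fun I _ => (IsDiffExpr.prod _ fun s _ =>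
    (isDiffExpr_dualFrame hD (K s) (I s)).mono (Nat.zero_le _)).mul
      (isDiffField_covIter hD l I A) (zero_add _)

theorem isBigO_ambientCov (hD : IsOpen D) (l : ℕ) (K : Fin (l + 2) → Fin 2 ⊕ Fin m)
    (A : Fin 2 ⊕ Fin m) : (fun p => ambientCov (gr p.1) p.2 l K A)
      =O[jetFilter m D α] fun p => covNorm l p.1 p.2 := by
  refine isBigO_principal.2 ⟨1, fun p hp => ?_⟩
  rw [one_mul, Real.norm_of_nonneg (covNorm_nonneg _ _ _), covNorm,
    nCov2_eq_sum_sq (isUnit_det_gmet_gr hD hp.1.1 hp.2)]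
  refine Real.abs_le_sqrt ((Finset.single_le_sum (f := fun A => ambientCov (gr p.1) p.2 l K A ^ 2)
    (fun _ _ => sq_nonneg _) (Finset.mem_univ A)).trans ?_)
  exact Finset.single_le_sum (f := fun K => ∑ A, ambientCov (gr p.1) p.2 l K A ^ 2)
    (fun _ _ => Finset.sum_nonneg fun _ _ => sq_nonneg _) (Finset.mem_univ K)

theorem isBigO_covIter (hD : IsOpen D) (l : ℕ) (I : Fin (l + 2) → Fin 2) (A : Fin 2 ⊕ Fin m) :
    (fun p => covIter (gr p.1) l p.2 I A) =O[jetFilter m D α] fun p => covNorm l p.1 p.2 := by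
  refine isBigO_jetFilter_congr (IsBigO.fun_sum (s := Finset.univ) fun K _ =>
    (IsDiffExpr.prod Finset.univ fun s _ =>
      isDiffExpr_jacobian hD (K s) (I s)).isBigO_mul (isBigO_ambientCov hD l K A))
    fun u hu x hx => ?_
  simp only
  rw [covIter_eq_slotwiseMap_ambientCov (isUnit_det_gmet_gr hD hu.1 hx), slotwiseMap_apply]
  rfl

theorem isBigO_covNorm (hD : IsOpen D) {l : ℕ}
    {G : ((Fin 2 → ℝ) → (Fin m → ℝ)) × (Fin 2 → ℝ) → ℝ}
    (hG : ∀ I A, (fun p => covIter (gr p.1) l p.2 I A) =O[jetFilter m D α] G) :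
    (fun p => covNorm l p.1 p.2) =O[jetFilter m D α] G := by
  have hamb (K : Fin (l + 2) → Fin 2 ⊕ Fin m) (A : Fin 2 ⊕ Fin m) :
      (fun p => ambientCov (gr p.1) p.2 l K A) =O[jetFilter m D α] G := by
    simp only [ambientCov, slotwiseMap_apply]
    exact IsBigO.fun_sum fun I _ => (IsDiffExpr.prod _ fun s _ =>
      isDiffExpr_dualFrame hD (K s) (I s)).isBigO_mul (hG I A)
  refine IsBigO.of_pow two_ne_zero (isBigO_jetFilter_congr (IsBigO.fun_sum (s := Finset.univ)
    fun K _ => IsBigO.fun_sum (s := Finset.univ) fun A _ => (hamb K A).pow 2)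
    fun u hu x hx => ?_)
  rw [Pi.pow_apply, covNorm_sq hD hu.1 hx, nCov2_eq_sum_sq (isUnit_det_gmet_gr hD hu.1 hx)]

theorem isBigO_nproj_vertical_pdIter (hD : IsOpen D) (l : ℕ) (I : Fin l → Fin 2)
    (A : Fin 2 ⊕ Fin m) : (fun p => nproj (gr p.1) p.2 (vertical (pdIter p.1 l p.2 I)) A)
      =O[jetFilter m D α] fun p => ‖pdIter p.1 l p.2‖ := by
  simp only [nproj_eq_mulVec, Matrix.mulVec, dotProduct]
  refine IsBigO.fun_sum fun B _ => (isDiffExpr_normalMatrix hD A B).isBigO_mul ?_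
  rcases B with k | a
  · exact isBigO_zero _ _
  · exact isBigO_of_le _ fun p => by
      rw [norm_norm]
      exact norm_apply_apply_le _ I a

theorem isBigO_covIter_sub_nproj (hD : IsOpen D) (l : ℕ) (I : Fin (l + 2) → Fin 2)
    (A : Fin 2 ⊕ Fin m) :
    (fun p => covIter (gr p.1) l p.2 I A
        - nproj (gr p.1) p.2 (vertical (pdIter p.1 (l + 2) p.2 I)) A)
      =O[jetFilter m D α] fun p => growth (l + 1) (jetSize l p.1 p.2) :=
  (isDiffField_covIter_sub_nproj hD l I A).isBigO

theorem isBigO_covNorm_add_growth (hD : IsOpen D) (l : ℕ) :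
    (fun p => covNorm l p.1 p.2) =O[jetFilter m D α]
      fun p => ‖pdIter p.1 (l + 2) p.2‖ + growth (l + 1) (jetSize l p.1 p.2) := by
  refine isBigO_covNorm hD fun I A => ?_
  refine ((isBigO_nproj_vertical_pdIter hD (l + 2) I A).add_add
    (isBigO_covIter_sub_nproj hD l I A)).congr (fun p => by ring) fun p => ?_
  rw [norm_norm, Real.norm_of_nonneg (growth_nonneg _ (jetSize_nonneg l p.1 p.2))]

theorem isBigO_pdIter_add_growth (hD : IsOpen D) (l : ℕ) :
    (fun p => pdIter p.1 (l + 2) p.2) =O[jetFilter m D α]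
      fun p => covNorm l p.1 p.2 + growth (l + 1) (jetSize l p.1 p.2) := by
  have hproj (I : Fin (l + 2) → Fin 2) (A : Fin 2 ⊕ Fin m) :
      (fun p => nproj (gr p.1) p.2 (vertical (pdIter p.1 (l + 2) p.2 I)) A) =O[jetFilter m D α]
        fun p => covNorm l p.1 p.2 + growth (l + 1) (jetSize l p.1 p.2) := by
    refine ((isBigO_covIter hD l I A).add_add (isBigO_covIter_sub_nproj hD l I A).neg_left).congr
      (fun p => by ring) fun p => ?_
    rw [Real.norm_of_nonneg (covNorm_nonneg _ _ _),
      Real.norm_of_nonneg (growth_nonneg _ (jetSize_nonneg l p.1 p.2))]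
  refine isBigO_pi.2 fun I => isBigO_pi.2 fun a => ?_
  exact isBigO_jetFilter_congr ((hproj I (Sum.inr a)).sub (IsBigO.fun_sum fun k _ =>
    (IsDiffExpr.pdIter le_rfl (fun _ => k) a).isBigO_mul (hproj I (Sum.inl k))))
    fun u hu x hx => apply_eq_nproj_sub_sum_gradMatrix hD hu.1 hx _ a

end Comparison

section MetricCompatibility

open Matrix

variable {κ ι ρ σ : Type*} {x : Fin 2 → ℝ}

/-- The entrywise partial derivative `∂ᵢM` of a matrix-valued function. -/
def matrixPartialDeriv (i : Fin 2) (M : (Fin 2 → ℝ) → Matrix κ ι ℝ) (x : Fin 2 → ℝ) :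
    Matrix κ ι ℝ := Matrix.of fun a b => partialDeriv i (fun y => M y a b) x

theorem matrixPartialDeriv_mul [Fintype ι] (i : Fin 2) {M : (Fin 2 → ℝ) → Matrix κ ι ℝ}
    {K : (Fin 2 → ℝ) → Matrix ι ρ ℝ} (hM : ∀ a b, DifferentiableAt ℝ (fun y => M y a b) x)
    (hK : ∀ a b, DifferentiableAt ℝ (fun y => K y a b) x) :
    matrixPartialDeriv i (fun y => M y * K y) x
      = matrixPartialDeriv i M x * K x + M x * matrixPartialDeriv i K x := by
  ext a c
  simp only [matrixPartialDeriv, of_apply, mul_apply, Matrix.add_apply]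
  rw [partialDeriv_sum _ _ fun b _ => (hM a b).fun_mul (hK b c), ← Finset.sum_add_distrib]
  exact Finset.sum_congr rfl fun b _ => partialDeriv_mul i (hM a b) (hK b c)

theorem partialDeriv_slotwiseMap [Fintype ι] [Fintype σ] {n : ℕ} (i : Fin 2)
    {B : (Fin 2 → ℝ) → Matrix κ ι ℝ} {T : (Fin 2 → ℝ) → (Fin n → ι) → σ → ℝ}
    (hB : ∀ a b, DifferentiableAt ℝ (fun y => B y a b) x)
    (hT : ∀ I, DifferentiableAt ℝ (fun y => T y I) x) (K : Fin n → κ) :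
    partialDeriv i (fun y => slotwiseMap (fun _ => B y) (T y) K) x
      = slotwiseMap (fun _ => B x) (fun I => partialDeriv i (fun y => T y I) x) K
        + ∑ a, slotwiseMap (Function.update (fun _ => B x) a (matrixPartialDeriv i B x))
            (T x) K := by
  have hTA (A : σ) (I : Fin n → ι) : DifferentiableAt ℝ (fun y => T y I A) x :=
    differentiableAt_pi.1 (hT I) A
  have hprod (I : Fin n → ι) : DifferentiableAt ℝ (fun y => ∏ s, B y (K s) (I s)) x :=
    (HasFDerivAt.finsetProd fun s _ => (hB (K s) (I s)).hasFDerivAt).differentiableAt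
  have hsum : DifferentiableAt ℝ (fun y => slotwiseMap (fun _ => B y) (T y) K) x :=
    differentiableAt_pi.2 fun A => by
      simp only [slotwiseMap_apply]
      exact DifferentiableAt.fun_sum fun I _ => (hprod I).fun_mul (hTA A I)
  have hupdate (a : Fin n) (I : Fin n → ι) (s : Fin n) :
      Function.update (fun _ => B x) a (matrixPartialDeriv i B x) s (K s) (I s)
        = Function.update (fun s => B x (K s) (I s)) a
          (partialDeriv i (fun y => B y (K a) (I a)) x) s := by
    rcases eq_or_ne s a with rfl | hs
    · simp only [Function.update_self, matrixPartialDeriv, of_apply]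
    · simp only [Function.update_of_ne hs]
  ext A
  rw [partialDeriv_apply i hsum]
  simp only [Pi.add_apply, Finset.sum_apply, slotwiseMap_apply, hupdate]
  rw [partialDeriv_sum _ _ fun I _ => (hprod I).fun_mul (hTA A I), Finset.sum_comm,
    ← Finset.sum_add_distrib]
  refine Finset.sum_congr rfl fun I _ => ?_
  rw [partialDeriv_mul i (hprod I) (hTA A I), partialDeriv_prod _ i fun s _ => hB (K s) (I s),
    partialDeriv_apply i (hT I), ← Finset.sum_mul, add_comm]

variable {m : ℕ} {D : Set (Fin 2 → ℝ)} {α : ℝ} {u : (Fin 2 → ℝ) → (Fin m → ℝ)}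

theorem transpose_matrixPartialDeriv_jacobian_mul_dualFrame (hD : IsOpen D)
    (hu : ContDiffOn ℝ (⊤ : ℕ∞) u D) (hx : x ∈ D) (i : Fin 2) :
    (matrixPartialDeriv i (jacobian (gr u)) x)ᵀ * dualFrame (gr u) x
      = Matrix.of fun j k => chr (gr u) i j k x := by
  have hgr := contDiffOn_gr hu
  have hderiv (A : Fin 2 ⊕ Fin m) (j : Fin 2) :
      matrixPartialDeriv i (jacobian (gr u)) x A j = pd (pd (gr u) i) j x A := by
    rw [pd_comm hD hgr hx, pd_eq_partialDeriv _ i, partialDeriv_apply]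
    · rfl
    · exact differentiableAt_of_contDiffOn hD (contDiffOn_partialDeriv hD j hgr) hx
  ext j k
  rw [dualFrame, ← Matrix.mul_assoc, mul_apply]
  simp only [chr, of_apply, mul_apply, transpose_apply, hderiv]
  refine Finset.sum_congr rfl fun l _ => ?_
  rw [mul_comm, ← transpose_apply (gmet (gr u) x)⁻¹, transpose_gmet_inv]
  rfl

theorem transpose_jacobian_mul_matrixPartialDeriv_dualFrame (hD : IsOpen D) (hu : Admissible D α u)
    (hx : x ∈ D) (i : Fin 2) :
    (jacobian (gr u) x)ᵀ * matrixPartialDeriv i (dualFrame (gr u)) x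
      = -Matrix.of fun j k => chr (gr u) i j k x := by
  have hone : matrixPartialDeriv i (fun y => (jacobian (gr u) y)ᵀ * dualFrame (gr u) y) x = 0 := by
    ext j k
    have hone : EqOn (fun y => ((jacobian (gr u) y)ᵀ * dualFrame (gr u) y) j k)
        (fun _ => (1 : Matrix (Fin 2) (Fin 2) ℝ) j k) D := fun y hy => by
      simp only [transpose_jacobian_mul_dualFrame (isUnit_det_gmet_gr hD hu.1 hy)]
    exact (partialDeriv_congr hD i hone hx).trans (partialDeriv_const i _)
  rw [matrixPartialDeriv_mul i (M := fun y => (jacobian (gr u) y)ᵀ)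
    (fun j A => (isDiffExpr_jacobian hD A j).differentiableAt hD hu hx)
    (fun A k => (isDiffExpr_dualFrame hD A k).differentiableAt hD hu hx)] at hone
  rw [← transpose_matrixPartialDeriv_jacobian_mul_dualFrame hD hu.1 hx]
  exact eq_neg_of_add_eq_zero_right hone

/-- The Christoffel terms of `∇T` come from differentiating the dual frame. -/
theorem slotwiseMap_transpose_jacobian_pd_ambientCov (hD : IsOpen D) (hu : Admissible D α u)
    (hx : x ∈ D) (l : ℕ) (i : Fin 2) (I : Fin (l + 2) → Fin 2) :
    slotwiseMap (fun _ => (jacobian (gr u) x)ᵀ)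
        (fun K => pd (fun y => ambientCov (gr u) y l K) i x) I
      = pd (fun y => covIter (gr u) l y I) i x
        - ∑ a, ∑ k, chr (gr u) i (I a) k x • covIter (gr u) l x (Function.update I a k) := by
  have hpd : (fun K => pd (fun y => ambientCov (gr u) y l K) i x) =
      slotwiseMap (fun _ => dualFrame (gr u) x) (fun I => pd (fun y => covIter (gr u) l y I) i x)
        + ∑ a, slotwiseMap (Function.update (fun _ => dualFrame (gr u) x) a
          (matrixPartialDeriv i (dualFrame (gr u)) x)) (covIter (gr u) l x) := by
    ext1 K
    simp only [Pi.add_apply, Finset.sum_apply]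
    exact partialDeriv_slotwiseMap i
      (fun A k => (isDiffExpr_dualFrame hD A k).differentiableAt hD hu hx)
      (fun I => (isDiffField_covIter hD l I).differentiableAt hD hu hx) K
  have hmul (a : Fin (l + 2)) : (fun s => (jacobian (gr u) x)ᵀ * Function.update
        (fun _ => dualFrame (gr u) x) a (matrixPartialDeriv i (dualFrame (gr u)) x) s)
      = Function.update (fun _ => 1) a (-Matrix.of fun j k => chr (gr u) i j k x) := by
    rw [← transpose_jacobian_mul_matrixPartialDeriv_dualFrame hD hu hx,
      ← transpose_jacobian_mul_dualFrame (isUnit_det_gmet_gr hD hu.1 hx)]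
    exact Function.comp_update (fun M => (jacobian (gr u) x)ᵀ * M) _ a _
  rw [hpd, slotwiseMap_add, slotwiseMap_sum]
  simp only [slotwiseMap_slotwiseMap, hmul,
    transpose_jacobian_mul_dualFrame (isUnit_det_gmet_gr hD hu.1 hx), slotwiseMap_one,
    Pi.add_apply, Finset.sum_apply, slotwiseMap_update_one, Matrix.neg_apply, of_apply, neg_smul,
    Finset.sum_neg_distrib, sub_eq_add_neg]

theorem covIter_succ_cons (hD : IsOpen D) (hu : Admissible D α u) (hx : x ∈ D) (l : ℕ) (i : Fin 2)
    (I : Fin (l + 2) → Fin 2) : covIter (gr u) (l + 1) x (Fin.cons i I)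
      = nproj (gr u) x (slotwiseMap (fun _ => (jacobian (gr u) x)ᵀ)
        (fun K => pd (fun y => ambientCov (gr u) y l K) i x) I) := by
  have hproj (J : Fin (l + 2) → Fin 2) :
      nproj (gr u) x (covIter (gr u) l x J) = covIter (gr u) l x J :=
    nproj_eq_self (transpose_jacobian_mulVec_covIter (isUnit_det_gmet_gr hD hu.1 hx) l J)
  rw [slotwiseMap_transpose_jacobian_pd_ambientCov hD hu hx, covIter, covDer]
  simp only [nproj_eq_mulVec] at hproj
  simp only [Fin.tail_cons, Fin.cons_zero, nproj_eq_mulVec, mulVec_sub, mulVec_sum, mulVec_smul,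
    hproj]

theorem partialDeriv_nCov2_eq_sum_ambientCov (hD : IsOpen D) (hu : Admissible D α u) (hx : x ∈ D)
    (l : ℕ) (i : Fin 2) : partialDeriv i (nCov2 (gr u) l) x
      = 2 * ∑ K, ambientCov (gr u) x l K ⬝ᵥ pd (fun y => ambientCov (gr u) y l K) i x := by
  have hnCov2 : EqOn (nCov2 (gr u) l)
      (fun y => ∑ K, ∑ A, ambientCov (gr u) y l K A * ambientCov (gr u) y l K A) D :=
    fun y hy => by simp only [nCov2_eq_sum_sq (isUnit_det_gmet_gr hD hu.1 hy), sq]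
  have hamb (K : Fin (l + 2) → Fin 2 ⊕ Fin m) (A : Fin 2 ⊕ Fin m) :=
    (isDiffExpr_ambientCov hD l K A).differentiableAt hD hu hx
  rw [partialDeriv_congr hD i hnCov2 hx, partialDeriv_sum _ _ fun K _ =>
    DifferentiableAt.fun_sum fun A _ => (hamb K A).fun_mul (hamb K A), Finset.mul_sum]
  refine Finset.sum_congr rfl fun K _ => ?_
  rw [partialDeriv_sum _ _ fun A _ => (hamb K A).fun_mul (hamb K A), dotProduct, Finset.mul_sum]
  refine Finset.sum_congr rfl fun A _ => ?_
  rw [partialDeriv_mul i (hamb K A) (hamb K A), pd_eq_partialDeriv,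
    partialDeriv_apply i (differentiableAt_pi.2 (hamb K))]
  ring

theorem partialDeriv_nCov2 (hD : IsOpen D) (hu : Admissible D α u) (hx : x ∈ D) (l : ℕ)
    (i : Fin 2) : partialDeriv i (nCov2 (gr u) l) x
      = 2 * ∑ I, covIter (gr u) l x I ⬝ᵥ slotwiseMap (fun _ => (gmet (gr u) x)⁻¹)
        (fun J => covIter (gr u) (l + 1) x (Fin.cons i J)) I := by
  set Y := slotwiseMap (fun _ => (jacobian (gr u) x)ᵀ)
    (fun K => pd (fun y => ambientCov (gr u) y l K) i x) with hY
  have hnormal (I J : Fin (l + 2) → Fin 2) :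
      covIter (gr u) l x I ⬝ᵥ Y J = covIter (gr u) l x I ⬝ᵥ nproj (gr u) x (Y J) :=
    (dotProduct_nproj (transpose_jacobian_mulVec_covIter
      (isUnit_det_gmet_gr hD hu.1 hx) l I) _).symm
  calc partialDeriv i (nCov2 (gr u) l) x
      = 2 * ∑ K, ambientCov (gr u) x l K ⬝ᵥ pd (fun y => ambientCov (gr u) y l K) i x :=
        partialDeriv_nCov2_eq_sum_ambientCov hD hu hx l i
    _ = 2 * ∑ I, covIter (gr u) l x I ⬝ᵥ slotwiseMap (fun _ => (gmet (gr u) x)⁻¹) Y I := by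
        rw [hY, slotwiseMap_slotwiseMap, ← transpose_gmet_inv]
        simp only [← transpose_mul]
        rw [sum_dotProduct_slotwiseMap_transpose]
        rfl
    _ = _ := by
        simp only [slotwiseMap, dotProduct_sum, dotProduct_smul, hnormal,
          covIter_succ_cons hD hu hx]
        rfl

end MetricCompatibility

section Kato

variable {m : ℕ} {D : Set (Fin 2 → ℝ)} {α : ℝ}

theorem norm_fderiv_le_sum_partialDeriv {F : Type*} [NormedAddCommGroup F] [NormedSpace ℝ F]
    (f : (Fin 2 → ℝ) → F) (x : Fin 2 → ℝ) : ‖fderiv ℝ f x‖ ≤ ∑ i, ‖partialDeriv i f x‖ := by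
  refine ContinuousLinearMap.opNorm_le_bound _ (Finset.sum_nonneg fun i _ => norm_nonneg _)
    fun v => ?_
  nth_rw 1 [pi_eq_sum_univ' v]
  rw [map_sum, Finset.sum_mul]
  refine norm_sum_le_of_le _ fun i _ => ?_
  rw [map_smul, norm_smul, mul_comm]
  exact mul_le_mul_of_nonneg_left (norm_le_pi_norm v i) (norm_nonneg _)

theorem isBigO_partialDeriv_nCov2 (hD : IsOpen D) (l : ℕ) (i : Fin 2) :
    (fun p => partialDeriv i (nCov2 (gr p.1) l) p.2) =O[jetFilter m D α]
      fun p => covNorm l p.1 p.2 * covNorm (l + 1) p.1 p.2 := by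
  have hinner (I : Fin (l + 2) → Fin 2) (A : Fin 2 ⊕ Fin m) :
      (fun p => slotwiseMap (fun _ => (gmet (gr p.1) p.2)⁻¹)
        (fun J => covIter (gr p.1) (l + 1) p.2 (Fin.cons i J)) I A) =O[jetFilter m D α]
          fun p => covNorm (l + 1) p.1 p.2 := by
    simp only [slotwiseMap_apply]
    exact IsBigO.fun_sum fun J _ => (IsDiffExpr.prod Finset.univ fun s _ =>
      isDiffExpr_gmet_inv hD (I s) (J s)).isBigO_mul (isBigO_covIter hD (l + 1) (Fin.cons i J) A)
  refine isBigO_jetFilter_congr ((IsBigO.fun_sum (s := Finset.univ) fun I _ =>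
    IsBigO.fun_sum (s := Finset.univ) fun A _ =>
      (isBigO_covIter hD l I A).mul (hinner I A)).const_mul_left 2) fun u hu x hx => ?_
  exact partialDeriv_nCov2 hD hu hx l i

/-- The function `√(1 + |∇ˡA|²)`, a differentiable substitute for `|∇ˡA|`. -/
def regNorm (l : ℕ) (u : (Fin 2 → ℝ) → (Fin m → ℝ)) (x : Fin 2 → ℝ) : ℝ :=
  √(1 + nCov2 (gr u) l x)

theorem one_add_nCov2_pos (hD : IsOpen D) {u : (Fin 2 → ℝ) → (Fin m → ℝ)}
    (hu : ContDiffOn ℝ (⊤ : ℕ∞) u D) {x : Fin 2 → ℝ} (hx : x ∈ D) (l : ℕ) :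
    0 < 1 + nCov2 (gr u) l x :=
  add_pos_of_pos_of_nonneg one_pos (nCov2_nonneg (isUnit_det_gmet_gr hD hu hx) l)

theorem contDiffOn_nCov2 (hD : IsOpen D) {u : (Fin 2 → ℝ) → (Fin m → ℝ)}
    (hu : Admissible D α u) (l : ℕ) : ContDiffOn ℝ (⊤ : ℕ∞) (nCov2 (gr u) l) D := by
  refine ContDiffOn.congr (f := fun x => ∑ K, ∑ A, ambientCov (gr u) x l K A ^ 2)
    (.sum fun K _ => .sum fun A _ => ((isDiffExpr_ambientCov hD l K A).contDiffOn hD hu).pow 2)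
    fun x hx => nCov2_eq_sum_sq (isUnit_det_gmet_gr hD hu.1 hx) l

theorem contDiffOn_regNorm (hD : IsOpen D) {u : (Fin 2 → ℝ) → (Fin m → ℝ)}
    (hu : Admissible D α u) (l : ℕ) : ContDiffOn ℝ (⊤ : ℕ∞) (regNorm l u) D :=
  (contDiffOn_const.add (contDiffOn_nCov2 hD hu l)).sqrt
    fun _ hx => (one_add_nCov2_pos hD hu.1 hx l).ne'

theorem partialDeriv_regNorm (hD : IsOpen D) {u : (Fin 2 → ℝ) → (Fin m → ℝ)}
    (hu : Admissible D α u) {x : Fin 2 → ℝ} (hx : x ∈ D) (l : ℕ) (i : Fin 2) :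
    partialDeriv i (regNorm l u) x
      = (2 * regNorm l u x)⁻¹ * partialDeriv i (nCov2 (gr u) l) x := by
  have hderiv := (differentiableAt_of_contDiffOn hD (contDiffOn_nCov2 hD hu l) hx).hasFDerivAt
  have hsqrt : HasFDerivAt (regNorm l u) _ x :=
    (hderiv.const_add 1).sqrt (one_add_nCov2_pos hD hu.1 hx l).ne'
  rw [partialDeriv, hsqrt.fderiv, partialDeriv, regNorm, ← one_div]
  rfl

theorem covNorm_le_regNorm (l : ℕ) (u : (Fin 2 → ℝ) → (Fin m → ℝ)) (x : Fin 2 → ℝ) :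
    covNorm l u x ≤ regNorm l u x :=
  Real.sqrt_le_sqrt (le_add_of_nonneg_left zero_le_one)

theorem isBigO_fderiv_regNorm (hD : IsOpen D) (l : ℕ) :
    (fun p => fderiv ℝ (regNorm l p.1) p.2) =O[jetFilter m D α]
      fun p => covNorm (l + 1) p.1 p.2 := by
  have hpartial (i : Fin 2) : (fun p => partialDeriv i (regNorm l p.1) p.2) =O[jetFilter m D α]
      fun p => covNorm (l + 1) p.1 p.2 := by
    have hreg : (fun p : ((Fin 2 → ℝ) → (Fin m → ℝ)) × (Fin 2 → ℝ) => (2 * regNorm l p.1 p.2)⁻¹ *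
        (covNorm l p.1 p.2 * covNorm (l + 1) p.1 p.2)) =O[jetFilter m D α]
          fun p => covNorm (l + 1) p.1 p.2 := by
      refine isBigO_principal.2 ⟨1, fun p hp => ?_⟩
      have hpos : 0 < regNorm l p.1 p.2 := Real.sqrt_pos.2 (one_add_nCov2_pos hD hp.1.1 hp.2 l)
      have hle : (2 * regNorm l p.1 p.2)⁻¹ * covNorm l p.1 p.2 ≤ 1 := by
        rw [inv_mul_le_one₀ (by positivity)]
        linarith [covNorm_le_regNorm l p.1 p.2]
      rw [← mul_assoc, norm_mul]
      gcongr
      rwa [Real.norm_of_nonneg (mul_nonneg (by positivity) (covNorm_nonneg _ _ _))]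
    exact isBigO_jetFilter_congr (((isBigO_refl _ _).mul
      (isBigO_partialDeriv_nCov2 hD l i)).trans hreg)
        fun u hu x hx => partialDeriv_regNorm hD hu hx l i
  refine .trans (isBigO_of_le _ fun p => ?_) (IsBigO.fun_sum (s := Finset.univ) fun i _ =>
    (hpartial i).norm_left)
  exact (norm_fderiv_le_sum_partialDeriv _ _).trans (le_abs_self _)

end Kato

section LpBounds

theorem eLpNorm_pi_le_sum {X ι F : Type*} [MeasurableSpace X] {μ : Measure X} [Fintype ι]
    [NormedAddCommGroup F] {f : X → ι → F} (hf : ∀ i, AEStronglyMeasurable (fun x => f x i) μ)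
    {p : ℝ≥0∞} (hp : 1 ≤ p) : eLpNorm f p μ ≤ ∑ i, eLpNorm (fun x => f x i) p μ := by
  calc eLpNorm f p μ ≤ eLpNorm (∑ i, fun x => ‖f x i‖) p μ := by
        refine eLpNorm_mono_real fun x => ?_
        rw [Finset.sum_apply, pi_norm_le_iff_of_nonneg (Finset.sum_nonneg fun i _ => norm_nonneg _)]
        exact fun i => Finset.single_le_sum (f := fun i => ‖f x i‖) (fun i _ => norm_nonneg _)
          (Finset.mem_univ i)
    _ ≤ ∑ i, eLpNorm (fun x => ‖f x i‖) p μ := eLpNorm_sum_le (fun i _ => (hf i).norm) hp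
    _ = ∑ i, eLpNorm (fun x => f x i) p μ := by simp only [eLpNorm_norm]

variable {m : ℕ} {D : Set (Fin 2 → ℝ)} {α : ℝ} {u : (Fin 2 → ℝ) → (Fin m → ℝ)}

theorem exists_eLpNorm_le_of_isBigO {E F : Type*} [NormedAddCommGroup E] [NormedAddCommGroup F]
    (hD : MeasurableSet D) {f : ((Fin 2 → ℝ) → (Fin m → ℝ)) × (Fin 2 → ℝ) → E}
    {g : ((Fin 2 → ℝ) → (Fin m → ℝ)) × (Fin 2 → ℝ) → F} (h : f =O[jetFilter m D α] g) :
    ∃ C : ℝ≥0, ∀ u, Admissible D α u → ∀ p : ℝ≥0∞,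
      eLpNorm (fun x => f (u, x)) p (volume.restrict D)
        ≤ C * eLpNorm (fun x => g (u, x)) p (volume.restrict D) := by
  obtain ⟨c, hc⟩ := isBigO_principal.1 h
  refine ⟨c.toNNReal, fun u hu p => eLpNorm_le_nnreal_smul_eLpNorm_of_ae_le_mul ?_ p⟩
  filter_upwards [ae_restrict_mem hD] with x hx
  rw [← NNReal.coe_le_coe, NNReal.coe_mul, coe_nnnorm, coe_nnnorm]
  exact (hc _ ⟨hu, hx⟩).trans
    (mul_le_mul_of_nonneg_right (Real.le_coe_toNNReal c) (norm_nonneg _))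

theorem memLp_of_isBigO {E F : Type*} [NormedAddCommGroup E] [NormedAddCommGroup F]
    (hD : MeasurableSet D) {f : ((Fin 2 → ℝ) → (Fin m → ℝ)) × (Fin 2 → ℝ) → E}
    {g : ((Fin 2 → ℝ) → (Fin m → ℝ)) × (Fin 2 → ℝ) → F} (h : f =O[jetFilter m D α] g)
    (hu : Admissible D α u)
    (hf : AEStronglyMeasurable (fun x => f (u, x)) (volume.restrict D)) {p : ℝ≥0∞}
    (hg : MemLp (fun x => g (u, x)) p (volume.restrict D)) :
    MemLp (fun x => f (u, x)) p (volume.restrict D) := by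
  obtain ⟨C, hC⟩ := exists_eLpNorm_le_of_isBigO hD h
  exact ⟨hf, (hC u hu p).trans_lt (ENNReal.mul_lt_top ENNReal.coe_lt_top hg.eLpNorm_lt_top)⟩

theorem continuousOn_pdIter (hD : IsOpen D) (hu : ContDiffOn ℝ (⊤ : ℕ∞) u D) (l : ℕ) :
    ContinuousOn (fun x => pdIter u l x) D :=
  continuousOn_pi.2 fun I => (contDiffOn_pdIter hD hu l I).continuousOn

theorem aestronglyMeasurable_pdIter (hD : IsOpen D) (hu : ContDiffOn ℝ (⊤ : ℕ∞) u D) (l : ℕ) :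
    AEStronglyMeasurable (fun x => pdIter u l x) (volume.restrict D) :=
  (continuousOn_pdIter hD hu l).aestronglyMeasurable hD.measurableSet

theorem aestronglyMeasurable_covNorm (hD : IsOpen D) (hu : Admissible D α u) (l : ℕ) :
    AEStronglyMeasurable (covNorm l u) (volume.restrict D) :=
  (contDiffOn_nCov2 hD hu l).continuousOn.sqrt.aestronglyMeasurable hD.measurableSet

theorem norm_fderiv_pdIter_apply_le (hD : IsOpen D) (hu : ContDiffOn ℝ (⊤ : ℕ∞) u D) {l : ℕ}
    (I : Fin l → Fin 2) (a : Fin m) {x : Fin 2 → ℝ} (hx : x ∈ D) :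
    ‖fderiv ℝ (fun y => pdIter u l y I a) x‖ ≤ 2 * ‖pdIter u (l + 1) x‖ := by
  refine (norm_fderiv_le_sum_partialDeriv _ x).trans ((Finset.sum_le_card_nsmul _ _
    ‖pdIter u (l + 1) x‖ fun i _ => ?_).trans_eq (by simp))
  rw [partialDeriv_pdIter hD hu I a i hx]
  exact norm_apply_apply_le _ _ _

theorem exists_eLpNorm_pdIter_apply_le {ι : Type*} [Finite ι] (P : PlanarConeCover D ι)
    (hD : IsOpen D) (n : ℕ) : ∃ C : ℝ≥0, ∀ u : (Fin 2 → ℝ) → (Fin m → ℝ),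
      ContDiffOn ℝ (⊤ : ℕ∞) u D → ∀ (l : ℕ) (I : Fin l → Fin 2) (a : Fin m),
      eLpNorm (fun x => pdIter u l x I a) (2 * (n + 1 : ℕ)) (volume.restrict D)
        ≤ C * (eLpNorm (fun x => pdIter u l x) 2 (volume.restrict D)
          + eLpNorm (fun x => pdIter u (l + 1) x) 2 (volume.restrict D)) := by
  obtain ⟨C, hC⟩ := P.eLpNorm_two_mul_le hD n
  refine ⟨C * 2, fun u hu l I a => ?_⟩
  have hsmooth : ContDiffOn ℝ 1 (fun x => pdIter u l x I a) D :=
    (contDiffOn_pi.1 (contDiffOn_pdIter hD hu l I) a).of_le (by simp)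
  have hderiv : eLpNorm (fderiv ℝ fun x => pdIter u l x I a) 2 (volume.restrict D)
      ≤ (2 : ℝ≥0) * eLpNorm (fun x => pdIter u (l + 1) x) 2 (volume.restrict D) :=
    eLpNorm_le_nnreal_smul_eLpNorm_of_ae_le_mul ((ae_restrict_mem hD.measurableSet).mono
      fun x hx => norm_fderiv_pdIter_apply_le hD hu I a hx) 2
  have hval : eLpNorm (fun x => pdIter u l x I a) 2 (volume.restrict D)
      ≤ (2 : ℝ≥0) * eLpNorm (fun x => pdIter u l x) 2 (volume.restrict D) :=
    (eLpNorm_mono fun x => norm_apply_apply_le (pdIter u l x) I a).trans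
      (le_mul_of_one_le_left zero_le (by norm_num))
  rw [ENNReal.coe_mul, mul_assoc, mul_add]
  exact (hC _ hsmooth).trans (mul_le_mul_right (add_le_add hval hderiv) _)

theorem exists_eLpNorm_pdIter_le {ι : Type*} [Finite ι] (P : PlanarConeCover D ι) (hD : IsOpen D)
    (n l : ℕ) : ∃ C : ℝ≥0, ∀ u : (Fin 2 → ℝ) → (Fin m → ℝ), ContDiffOn ℝ (⊤ : ℕ∞) u D →
      eLpNorm (fun x => pdIter u l x) (2 * (n + 1 : ℕ)) (volume.restrict D)
        ≤ C * (eLpNorm (fun x => pdIter u l x) 2 (volume.restrict D)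
          + eLpNorm (fun x => pdIter u (l + 1) x) 2 (volume.restrict D)) := by
  obtain ⟨C, hC⟩ := exists_eLpNorm_pdIter_apply_le (m := m) P hD n
  refine ⟨∑ _I : Fin l → Fin 2, ∑ _a : Fin m, C, fun u hu => ?_⟩
  have hp : (1 : ℝ≥0∞) ≤ 2 * (n + 1 : ℕ) := by exact_mod_cast (by omega : 1 ≤ 2 * (n + 1))
  have hcont (I : Fin l → Fin 2) : ContinuousOn (fun x => pdIter u l x I) D :=
    (contDiffOn_pdIter hD hu l I).continuousOn
  simp only [ENNReal.ofNNReal_finsetSum, Finset.sum_mul]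
  refine (eLpNorm_pi_le_sum (fun I => ?_) hp).trans (Finset.sum_le_sum fun I _ => ?_)
  · exact (hcont I).aestronglyMeasurable hD.measurableSet
  refine (eLpNorm_pi_le_sum (fun a => ?_) hp).trans (Finset.sum_le_sum fun a _ => hC u hu l I a)
  exact (continuousOn_pi.1 (hcont I) a).aestronglyMeasurable hD.measurableSet

/-- The Sobolev norm `∑_{j ≤ l} ‖Dʲ⁺²u‖_{L²(D)}` of the Hessian, possibly infinite. -/
def hessNorm (D : Set (Fin 2 → ℝ)) (l : ℕ) (u : (Fin 2 → ℝ) → (Fin m → ℝ)) : ℝ≥0∞ :=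
  ∑ j ∈ Finset.range (l + 1), eLpNorm (fun x => pdIter u (j + 2) x) 2 (volume.restrict D)

theorem eLpNorm_pdIter_le_hessNorm {j l : ℕ} (hj : j ≤ l) (u : (Fin 2 → ℝ) → (Fin m → ℝ)) :
    eLpNorm (fun x => pdIter u (j + 2) x) 2 (volume.restrict D) ≤ hessNorm D l u :=
  Finset.single_le_sum
    (f := fun j => eLpNorm (fun x => pdIter u (j + 2) x) 2 (volume.restrict D))
    (fun _ _ => zero_le) (Finset.mem_range_succ_iff.2 hj)

theorem exists_eLpNorm_jetSize_le {ι : Type*} [Finite ι] (P : PlanarConeCover D ι)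
    (hD : IsOpen D) (n l : ℕ) : ∃ C : ℝ≥0, ∀ u : (Fin 2 → ℝ) → (Fin m → ℝ),
      ContDiffOn ℝ (⊤ : ℕ∞) u D →
      eLpNorm (jetSize l u) (2 * (n + 1 : ℕ)) (volume.restrict D) ≤ C * hessNorm D l u := by
  choose C hC using exists_eLpNorm_pdIter_le (m := m) P hD n
  refine ⟨∑ j ∈ Finset.Icc 1 l, C (j + 1) * 2, fun u hu => ?_⟩
  have hp : (1 : ℝ≥0∞) ≤ 2 * (n + 1 : ℕ) := by exact_mod_cast (by omega : 1 ≤ 2 * (n + 1))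
  have hjet : jetSize l u = ∑ j ∈ Finset.Icc 1 l, fun x => ‖pdIter u (j + 1) x‖ := by
    ext x
    rw [jetSize, Finset.sum_apply]
  rw [hjet, ENNReal.ofNNReal_finsetSum, Finset.sum_mul]
  refine (eLpNorm_sum_le (fun j _ => (aestronglyMeasurable_pdIter hD hu (j + 1)).norm) hp).trans
    (Finset.sum_le_sum fun j hj => ?_)
  obtain ⟨hj1, hjl⟩ := Finset.mem_Icc.1 hj
  obtain ⟨i, rfl⟩ := Nat.exists_eq_add_of_le' hj1
  rw [eLpNorm_norm, ENNReal.coe_mul, mul_assoc, ENNReal.coe_ofNat, two_mul (hessNorm D l u)]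
  exact (hC _ u hu).trans <| mul_le_mul_right (add_le_add
    (eLpNorm_pdIter_le_hessNorm (Nat.le_of_succ_le hjl) u) (eLpNorm_pdIter_le_hessNorm hjl u)) _

theorem aestronglyMeasurable_jetSize (hD : IsOpen D) (hu : ContDiffOn ℝ (⊤ : ℕ∞) u D) (l : ℕ) :
    AEStronglyMeasurable (jetSize l u) (volume.restrict D) :=
  Finset.aestronglyMeasurable_fun_sum _ fun j _ => (aestronglyMeasurable_pdIter hD hu (j + 1)).norm

theorem growth_succ (w : ℕ) (R : ℝ) : growth (w + 1) R = R + R ^ (w + 1) := by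
  rw [growth, Nat.min_eq_left (Nat.le_add_left 1 w), pow_one]

theorem exists_eLpNorm_growth_jetSize_le {ι : Type*} [Finite ι] (P : PlanarConeCover D ι)
    (hD : IsOpen D) (l : ℕ) : ∃ C : ℝ≥0, ∀ u : (Fin 2 → ℝ) → (Fin m → ℝ),
      ContDiffOn ℝ (⊤ : ℕ∞) u D →
      eLpNorm (fun x => growth (l + 1) (jetSize l u x)) 2 (volume.restrict D)
        ≤ C * (hessNorm D l u + hessNorm D l u ^ (l + 1)) := by
  obtain ⟨A, hA⟩ := exists_eLpNorm_jetSize_le (m := m) P hD 0 l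
  obtain ⟨B, hB⟩ := exists_eLpNorm_jetSize_le (m := m) P hD l l
  refine ⟨A + B ^ (l + 1), fun u hu => ?_⟩
  have hjet := aestronglyMeasurable_jetSize hD hu l
  simp only [growth_succ]
  calc eLpNorm (fun x => jetSize l u x + jetSize l u x ^ (l + 1)) 2 (volume.restrict D)
      ≤ eLpNorm (jetSize l u) 2 (volume.restrict D)
          + eLpNorm (fun x => jetSize l u x ^ (l + 1)) 2 (volume.restrict D) :=
        eLpNorm_add_le hjet (hjet.pow (l + 1)) one_le_two
    _ ≤ A * hessNorm D l u + (B * hessNorm D l u) ^ (l + 1) := by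
        rw [eLpNorm_pow_eq _ l.succ_ne_zero]
        exact add_le_add (by simpa using hA u hu) (pow_le_pow_left' (hB u hu) _)
    _ ≤ (A + B ^ (l + 1) : ℝ≥0) * (hessNorm D l u + hessNorm D l u ^ (l + 1)) := by
        rw [mul_pow, ENNReal.coe_add, ENNReal.coe_pow, mul_add, add_mul, add_mul]
        exact add_le_add le_self_add le_add_self

theorem exists_eLpNorm_covNorm_le {ι : Type*} [Finite ι] (P : PlanarConeCover D ι)
    (hD : IsOpen D) (α : ℝ) (l : ℕ) : ∃ C : ℝ≥0, ∀ u : (Fin 2 → ℝ) → (Fin m → ℝ),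
      Admissible D α u → eLpNorm (covNorm l u) 2 (volume.restrict D)
        ≤ C * (hessNorm D l u + hessNorm D l u ^ (l + 1)) := by
  obtain ⟨A, hA⟩ := exists_eLpNorm_le_of_isBigO hD.measurableSet
    (isBigO_covNorm_add_growth (m := m) (α := α) hD l)
  obtain ⟨B, hB⟩ := exists_eLpNorm_growth_jetSize_le (m := m) P hD l
  refine ⟨A * (1 + B), fun u hu => (hA u hu 2).trans ?_⟩
  have hgrowth : AEStronglyMeasurable (fun x => growth (l + 1) (jetSize l u x))
      (volume.restrict D) :=
    have hjet := aestronglyMeasurable_jetSize hD hu.1 l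
    (hjet.pow _).add (hjet.pow _)
  rw [ENNReal.coe_mul, mul_assoc, ENNReal.coe_add, ENNReal.coe_one, add_mul, one_mul]
  refine mul_le_mul_right ((eLpNorm_add_le (aestronglyMeasurable_pdIter hD hu.1 (l + 2)).norm
    hgrowth one_le_two).trans (add_le_add ?_ (hB u hu.1))) _
  rw [eLpNorm_norm]
  exact (eLpNorm_pdIter_le_hessNorm le_rfl u).trans le_self_add

end LpBounds

section Finiteness

variable {ι : Type*} [Finite ι] {m : ℕ} {D : Set (Fin 2 → ℝ)} {α : ℝ}
  {u : (Fin 2 → ℝ) → (Fin m → ℝ)}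

theorem memLp_covNorm_of_succ (P : PlanarConeCover D ι) (hD : IsOpen D) (hvol : volume D ≠ ∞)
    (hu : Admissible D α u) {l : ℕ} (h : MemLp (covNorm (l + 1) u) 2 (volume.restrict D))
    {p : ℝ≥0∞} (hp : p ≠ ∞) : MemLp (covNorm l u) p (volume.restrict D) := by
  have : IsFiniteMeasure (volume.restrict D) := isFiniteMeasure_restrict.2 hvol
  have hsmooth := contDiffOn_regNorm hD hu l
  have hderiv : MemLp (fderiv ℝ (regNorm l u)) 2 (volume.restrict D) :=
    memLp_of_isBigO hD.measurableSet (isBigO_fderiv_regNorm hD l) hu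
      ((hsmooth.continuousOn_fderiv_of_isOpen hD (by simp)).aestronglyMeasurable hD.measurableSet) h
  obtain ⟨n, hn⟩ := ENNReal.exists_nat_gt hp
  have hpn : p ≤ 2 * (n + 1 : ℕ) := hn.le.trans (by exact_mod_cast (by omega : n ≤ 2 * (n + 1)))
  refine ((P.memLp_two_mul_of_fderiv hD hvol (hsmooth.of_le (by simp)) hderiv n).mono_exponent
    hpn).mono (aestronglyMeasurable_covNorm hD hu l) (.of_forall fun x => ?_)
  rw [Real.norm_of_nonneg (covNorm_nonneg l u x)]
  exact (covNorm_le_regNorm l u x).trans (le_abs_self _)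

theorem memLp_covNorm_of_lt (P : PlanarConeCover D ι) (hD : IsOpen D) (hvol : volume D ≠ ∞)
    (hu : Admissible D α u) {j l : ℕ} (hjl : j < l)
    (h : MemLp (covNorm l u) 2 (volume.restrict D)) {p : ℝ≥0∞} (hp : p ≠ ∞) :
    MemLp (covNorm j u) p (volume.restrict D) := by
  induction l, hjl using Nat.le_induction with
  | base => exact memLp_covNorm_of_succ P hD hvol hu h hp
  | succ l _ ih => exact ih (memLp_covNorm_of_succ P hD hvol hu h ENNReal.ofNat_ne_top)

theorem memLp_pdIter_of_memLp_covNorm (hD : IsOpen D) (hu : Admissible D α u) {l : ℕ}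
    (hlow : ∀ j < l, ∀ q : ℝ≥0∞, q ≠ ∞ →
      MemLp (fun x => pdIter u (j + 2) x) q (volume.restrict D)) {p : ℝ≥0∞} (hp : p ≠ ∞)
    (h : MemLp (covNorm l u) p (volume.restrict D)) :
    MemLp (fun x => pdIter u (l + 2) x) p (volume.restrict D) := by
  have hjet (q : ℝ≥0∞) (hq : q ≠ ∞) : MemLp (jetSize l u) q (volume.restrict D) := by
    refine memLp_finsetSum _ fun j hj => MemLp.norm ?_
    obtain ⟨hj1, hjl⟩ := Finset.mem_Icc.1 hj
    obtain ⟨i, rfl⟩ := Nat.exists_eq_add_of_le' hj1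
    exact hlow i hjl q hq
  have hpow : MemLp (fun x => jetSize l u x ^ (l + 1)) p (volume.restrict D) := by
    refine ⟨(aestronglyMeasurable_jetSize hD hu.1 l).pow _, ?_⟩
    rw [eLpNorm_pow_eq _ l.succ_ne_zero]
    exact ENNReal.pow_lt_top
      (hjet _ (ENNReal.mul_ne_top hp (ENNReal.natCast_ne_top _))).eLpNorm_lt_top
  refine memLp_of_isBigO hD.measurableSet (isBigO_pdIter_add_growth hD l) hu
    (aestronglyMeasurable_pdIter hD hu.1 (l + 2)) ?_
  simp only [growth_succ]
  exact h.add ((hjet p hp).add hpow)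

theorem memLp_pdIter_of_memLp_covNorm_two (P : PlanarConeCover D ι) (hD : IsOpen D)
    (hvol : volume D ≠ ∞) (hu : Admissible D α u) {j l : ℕ} (hjl : j ≤ l)
    (h : MemLp (covNorm l u) 2 (volume.restrict D)) :
    MemLp (fun x => pdIter u (j + 2) x) 2 (volume.restrict D) := by
  have hlow : ∀ j < l, ∀ q : ℝ≥0∞, q ≠ ∞ →
      MemLp (fun x => pdIter u (j + 2) x) q (volume.restrict D) := by
    intro j
    induction j using Nat.strong_induction_on with
    | _ j ih =>
      intro hj q hq
      exact memLp_pdIter_of_memLp_covNorm hD hu (fun i hi => ih i hi (hi.trans hj)) hq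
        (memLp_covNorm_of_lt P hD hvol hu hj h hq)
  rcases hjl.lt_or_eq with hj | rfl
  · exact hlow j hj 2 ENNReal.ofNat_ne_top
  · exact memLp_pdIter_of_memLp_covNorm hD hu hlow ENNReal.ofNat_ne_top h

end Finiteness

section Energy

theorem toReal_eLpNorm_two_sq {X F : Type*} [MeasurableSpace X] {μ : Measure X}
    [NormedAddCommGroup F] {f : X → F} (hf : AEStronglyMeasurable f μ) :
    (eLpNorm f 2 μ).toReal ^ 2 = ∫ x, ‖f x‖ ^ 2 ∂μ := by
  rw [toReal_eLpNorm hf, lpNorm_eq_integral_norm_rpow_toReal two_ne_zero ENNReal.ofNat_ne_top hf]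
  simp only [ENNReal.toReal_ofNat, Real.rpow_ofNat]
  exact Real.rpow_inv_natCast_pow (integral_nonneg fun x => sq_nonneg _) two_ne_zero

variable {m : ℕ} {D : Set (Fin 2 → ℝ)} {α : ℝ} {u : (Fin 2 → ℝ) → (Fin m → ℝ)}

theorem nCov2_le_mul_sqrt_det (hD : IsOpen D) (hu : ContDiffOn ℝ (⊤ : ℕ∞) u D) {x : Fin 2 → ℝ}
    (hx : x ∈ D) (l : ℕ) : nCov2 (gr u) l x ≤ nCov2 (gr u) l x * √(gmet (gr u) x).det :=
  le_mul_of_one_le_right (nCov2_nonneg (isUnit_det_gmet_gr hD hu hx) l)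
    (Real.one_le_sqrt.2 (one_le_det_gmet_gr hD hu hx))

theorem memLp_covNorm_of_integrable (hD : IsOpen D) (hu : Admissible D α u) {l : ℕ}
    (h : Integrable (fun x => nCov2 (gr u) l x * √(gmet (gr u) x).det) (volume.restrict D)) :
    MemLp (covNorm l u) 2 (volume.restrict D) := by
  have hmeas := aestronglyMeasurable_covNorm hD hu l
  refine (memLp_two_iff_integrable_sq hmeas).2 (h.mono (hmeas.pow 2) ?_)
  filter_upwards [ae_restrict_mem hD.measurableSet] with x hx
  rw [Real.norm_of_nonneg (sq_nonneg _), covNorm_sq hD hu.1 hx]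
  exact (nCov2_le_mul_sqrt_det hD hu.1 hx l).trans (le_abs_self _)

theorem isBigO_sqrt_det_gmet (hD : IsOpen D) :
    (fun p => √(gmet (gr p.1) p.2).det) =O[jetFilter m D α] fun _ => (1 : ℝ) := by
  refine IsBigO.of_pow two_ne_zero ((isBigO_jetFilter_congr (isDiffExpr_det_gmet hD).isBigO_one
    fun u hu x hx => ?_).congr_right fun _ => (one_pow 2).symm)
  exact Real.sq_sqrt (zero_le_one.trans (one_le_det_gmet_gr hD hu.1 hx))

theorem exists_integral_nCov2_le (hD : IsOpen D) (m : ℕ) (α : ℝ) (l : ℕ) :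
    ∃ C : ℝ, 0 ≤ C ∧ ∀ u : (Fin 2 → ℝ) → (Fin m → ℝ), Admissible D α u →
      MemLp (covNorm l u) 2 (volume.restrict D) →
      ∫ x in D, nCov2 (gr u) l x * √(gmet (gr u) x).det
        ≤ C * (eLpNorm (covNorm l u) 2 (volume.restrict D)).toReal ^ 2 := by
  obtain ⟨C, hC0, hC⟩ := (isBigO_sqrt_det_gmet (m := m) (α := α) hD).exists_nonneg
  refine ⟨C, hC0, fun u hu hmem => ?_⟩
  have hdet (x : Fin 2 → ℝ) (hx : x ∈ D) : √(gmet (gr u) x).det ≤ C := by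
    simpa [abs_of_nonneg, Real.sqrt_nonneg] using isBigOWith_principal.1 hC (u, x) ⟨hu, hx⟩
  have hnonneg (x : Fin 2 → ℝ) (hx : x ∈ D) : 0 ≤ nCov2 (gr u) l x :=
    nCov2_nonneg (isUnit_det_gmet_gr hD hu.1 hx) l
  rw [toReal_eLpNorm_two_sq hmem.aestronglyMeasurable, ← integral_const_mul]
  refine integral_mono_of_nonneg ?_ (((memLp_two_iff_integrable_sq_norm
    hmem.aestronglyMeasurable).1 hmem).const_mul C) ?_
  · filter_upwards [ae_restrict_mem hD.measurableSet] with x hx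
    exact mul_nonneg (hnonneg x hx) (Real.sqrt_nonneg _)
  · filter_upwards [ae_restrict_mem hD.measurableSet] with x hx
    rw [Real.norm_eq_abs, sq_abs, covNorm_sq hD hu.1 hx, mul_comm]
    exact mul_le_mul_of_nonneg_right (hdet x hx) (hnonneg x hx)

theorem exists_integral_nCov2_le_hessNorm {ι : Type*} [Finite ι] (P : PlanarConeCover D ι)
    (hD : IsOpen D) (hvol : volume D ≠ ∞) (m : ℕ) (α : ℝ) (l : ℕ) :
    ∃ C : ℝ, 0 ≤ C ∧ ∀ u : (Fin 2 → ℝ) → (Fin m → ℝ), Admissible D α u →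
      ∫ x in D, nCov2 (gr u) l x * √(gmet (gr u) x).det
        ≤ C * ((hessNorm D l u).toReal + (hessNorm D l u).toReal ^ (l + 1)) ^ 2 := by
  obtain ⟨A, hA0, hA⟩ := exists_integral_nCov2_le hD m α l
  obtain ⟨B, hB⟩ := exists_eLpNorm_covNorm_le (m := m) P hD α l
  refine ⟨A * B ^ 2, by positivity, fun u hu => ?_⟩
  by_cases hmem : MemLp (covNorm l u) 2 (volume.restrict D)
  · have hfin : hessNorm D l u ≠ ∞ := ENNReal.sum_ne_top.2 fun j hj =>
      (memLp_pdIter_of_memLp_covNorm_two P hD hvol hu (Finset.mem_range_succ_iff.1 hj)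
        hmem).eLpNorm_ne_top
    have hcov : (eLpNorm (covNorm l u) 2 (volume.restrict D)).toReal
        ≤ B * ((hessNorm D l u).toReal + (hessNorm D l u).toReal ^ (l + 1)) := by
      have hpow := ENNReal.pow_ne_top (n := l + 1) hfin
      have := ENNReal.toReal_mono
        (ENNReal.mul_ne_top ENNReal.coe_ne_top (ENNReal.add_ne_top.2 ⟨hfin, hpow⟩)) (hB u hu)
      rwa [ENNReal.toReal_mul, ENNReal.coe_toReal, ENNReal.toReal_add hfin hpow,
        ENNReal.toReal_pow] at this
    calc _ ≤ A * (eLpNorm (covNorm l u) 2 (volume.restrict D)).toReal ^ 2 := hA u hu hmem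
      _ ≤ A * (B * ((hessNorm D l u).toReal + (hessNorm D l u).toReal ^ (l + 1))) ^ 2 := by gcongr
      _ = _ := by ring
  · rw [integral_undef (mt (memLp_covNorm_of_integrable hD hu) hmem)]
    positivity

end Energy

section DiskEstimate

variable {m : ℕ} {r α : ℝ} {u : (Fin 2 → ℝ) → (Fin m → ℝ)}

theorem Wnorm_nonneg (r : ℝ) (k : ℕ) (u : (Fin 2 → ℝ) → (Fin m → ℝ)) : 0 ≤ Wnorm r k u :=
  Real.sqrt_nonneg _

theorem norm_sq_le_sum_sum_sq {ι κ : Type*} [Fintype ι] [Fintype κ] (f : ι → κ → ℝ) :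
    ‖f‖ ^ 2 ≤ ∑ i, ∑ k, f i k ^ 2 := by
  refine (Real.le_sqrt (norm_nonneg _) (by positivity)).1
    ((pi_norm_le_iff_of_nonneg (Real.sqrt_nonneg _)).2 fun i =>
      (pi_norm_le_iff_of_nonneg (Real.sqrt_nonneg _)).2 fun k => Real.abs_le_sqrt ?_)
  exact (Finset.single_le_sum (f := fun k => f i k ^ 2) (fun _ _ => sq_nonneg _)
    (Finset.mem_univ k)).trans (Finset.single_le_sum (f := fun i => ∑ k, f i k ^ 2)
      (fun _ _ => by positivity) (Finset.mem_univ i))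

theorem toReal_eLpNorm_pdIter_le_Wnorm {j k : ℕ} (hjk : j ≤ k)
    (h : MemLp (fun x => pdIter u (j + 2) x) 2 (volume.restrict (Dr r))) :
    (eLpNorm (fun x => pdIter u (j + 2) x) 2 (volume.restrict (Dr r))).toReal ≤ Wnorm r k u := by
  have hint : IntegrableOn (fun x => ∑ I, ∑ a, pdIter u (j + 2) x I a ^ 2) (Dr r) :=
    integrable_finsetSum _ fun I _ => integrable_finsetSum _ fun a _ =>
      (memLp_pi_iff.1 (memLp_pi_iff.1 h I) a).integrable_sq
  refine Real.le_sqrt_of_sq_le ?_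
  rw [toReal_eLpNorm_two_sq h.aestronglyMeasurable]
  calc ∫ x in Dr r, ‖pdIter u (j + 2) x‖ ^ 2
      ≤ ∫ x in Dr r, ∑ I, ∑ a, pdIter u (j + 2) x I a ^ 2 :=
        integral_mono_of_nonneg (.of_forall fun x => sq_nonneg _) hint
          (.of_forall fun x => norm_sq_le_sum_sum_sq _)
    _ ≤ _ := Finset.single_le_sum
        (f := fun j => ∫ x in Dr r, ∑ I, ∑ a, pdIter u (j + 2) x I a ^ 2)
        (fun _ _ => integral_nonneg fun x => by positivity) (Finset.mem_range_succ_iff.2 hjk)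

theorem toReal_hessNorm_le_Wnorm (hu : ContDiffOn ℝ (⊤ : ℕ∞) u (Dr r)) {l k : ℕ} (hlk : l ≤ k) :
    (hessNorm (Dr r) l u).toReal ≤ (l + 1) * Wnorm r k u := by
  by_cases hfin : hessNorm (Dr r) l u = ∞
  · rw [hfin, ENNReal.toReal_top]
    exact mul_nonneg (by positivity) (Wnorm_nonneg r k u)
  have hterm (j : ℕ) (hj : j ∈ Finset.range (l + 1)) :=
    (ENNReal.sum_ne_top.1 hfin) j hj
  rw [hessNorm, ENNReal.toReal_sum hterm]
  refine (Finset.sum_le_card_nsmul _ _ (Wnorm r k u) fun j hj => ?_).trans_eq (by simp)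
  exact toReal_eLpNorm_pdIter_le_Wnorm ((Finset.mem_range_succ_iff.1 hj).trans hlk)
    ⟨aestronglyMeasurable_pdIter (isOpen_Dr r) hu (j + 2), (hterm j hj).lt_top⟩

theorem exists_integral_nCov2_le_sum_Wnorm_pow (hr : 0 < r) (m : ℕ) (α : ℝ) (l : ℕ) :
    ∃ C : ℝ, 0 ≤ C ∧ ∀ u : (Fin 2 → ℝ) → (Fin m → ℝ), Admissible (Dr r) α u → ∀ k ≥ l,
      ∫ x in Dr r, nCov2 (gr u) l x * √(gmet (gr u) x).det
        ≤ C * (∑ s ∈ Finset.Icc 1 (k + 1), Wnorm r k u ^ s) ^ 2 := by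
  obtain ⟨A, hA0, hA⟩ := exists_integral_nCov2_le_hessNorm (diskConeCover hr) (isOpen_Dr r)
    (volume_Dr_ne_top hr.le) m α l
  refine ⟨A * ((l + 1) + (l + 1) ^ (l + 1)) ^ 2, by positivity, fun u hu k hlk => ?_⟩
  set S := ∑ s ∈ Finset.Icc 1 (k + 1), Wnorm r k u ^ s
  have hW := Wnorm_nonneg r k u
  have hpow (s : ℕ) (hs1 : 1 ≤ s) (hsk : s ≤ k + 1) : Wnorm r k u ^ s ≤ S :=
    Finset.single_le_sum (f := fun s => Wnorm r k u ^ s) (fun _ _ => by positivity)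
      (Finset.mem_Icc.2 ⟨hs1, hsk⟩)
  have hhess := toReal_hessNorm_le_Wnorm hu.1 hlk
  have hsum : (hessNorm (Dr r) l u).toReal + (hessNorm (Dr r) l u).toReal ^ (l + 1)
      ≤ ((l + 1) + (l + 1) ^ (l + 1)) * S := by
    calc (hessNorm (Dr r) l u).toReal + (hessNorm (Dr r) l u).toReal ^ (l + 1)
        ≤ (l + 1) * Wnorm r k u + ((l + 1) * Wnorm r k u) ^ (l + 1) := by gcongr
      _ = (l + 1) * Wnorm r k u ^ 1 + (l + 1) ^ (l + 1) * Wnorm r k u ^ (l + 1) := by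
          rw [pow_one, mul_pow]
      _ ≤ (l + 1) * S + (l + 1) ^ (l + 1) * S := by
          gcongr
          exacts [hpow 1 le_rfl (by omega), hpow (l + 1) (by omega) (by omega)]
      _ = _ := by ring
  calc _ ≤ A * ((hessNorm (Dr r) l u).toReal + (hessNorm (Dr r) l u).toReal ^ (l + 1)) ^ 2 :=
        hA u hu
    _ ≤ A * (((l + 1) + (l + 1) ^ (l + 1)) * S) ^ 2 := by gcongr
    _ = _ := by ring

end DiskEstimate

end Stmt17

open Stmt17 MeasureTheory in
/-- Lemma 4.4: for a graph over the disk `D_r` with `|Du| ≤ α`: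
`‖A‖_{H^{k,2}} ≤ C Σ_{s=1}^{k+1} ‖D²u‖^s_{W^{k,2}}` with `C = C(r, α, k)`. -/
theorem stmt_17 (m : ℕ) (r α : ℝ) (hr : 0 < r) (hα : 0 < α) (k : ℕ) :
    ∃ C > (0:ℝ), ∀ u : (Fin 2 → ℝ) → (Fin m → ℝ),
      ContDiffOn ℝ (⊤ : ℕ∞) u (Dr r) →
      (∀ x ∈ Dr r, ∑ i, ∑ a, (fderiv ℝ u x (Pi.single i 1) a) ^ 2 ≤ α ^ 2) →
      HAnorm r k u ≤ C * ∑ s ∈ Finset.Icc 1 (k+1), Wnorm r k u ^ s := by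
  choose C _ hC using exists_integral_nCov2_le_sum_Wnorm_pow hr m α
  refine ⟨√(∑ l ∈ Finset.range (k + 1), C l) + 1, by positivity, fun u hsmooth hgrad => ?_⟩
  set S := ∑ s ∈ Finset.Icc 1 (k + 1), Wnorm r k u ^ s
  have hS : 0 ≤ S := Finset.sum_nonneg fun s _ => pow_nonneg (Wnorm_nonneg r k u) s
  calc HAnorm r k u ≤ √(∑ l ∈ Finset.range (k + 1), C l * S ^ 2) :=
        Real.sqrt_le_sqrt <| Finset.sum_le_sum fun l hl =>
          hC l u ⟨hsmooth, hgrad⟩ k (Finset.mem_range_succ_iff.1 hl)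
    _ = √(∑ l ∈ Finset.range (k + 1), C l) * S := by
        rw [← Finset.sum_mul, Real.sqrt_mul' _ (sq_nonneg S), Real.sqrt_sq hS]
    _ ≤ (√(∑ l ∈ Finset.range (k + 1), C l) + 1) * S := by
        gcongr
        exact le_add_of_nonneg_right zero_le_one
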